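/- Let P ∈ ℝ[x] be a polynomial whose coefficient of x is non-Liouville. Then there exist constants C > 0 and X₁ > 0 such that for all real X ≥ X₁, |S(X) − X/ζ(2)| ≤ C·X/(log log X)^{1/3}, where ζ(2) = π²/6. -/

import Mathlib

open Real Finset

/-- `α` is Liouville: for every `n ∈ ℕ` there are integers `p, q` with `q > 1`
and `|α - p/q| ≤ q^(-n)`. -/
def IsLiouvilleReal (α : ℝ) : Prop :=
  ∀ n : ℕ, ∃ p q : ℤ, 1 < q ∧ |α - (p : ℝ) / (q : ℝ)| ≤ (q : ℝ) ^ (-(n : ℤ))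

open Classical in
/-- The finset of primes `p < z`. -/
noncomputable def primesLt (z : ℝ) : Finset ℕ :=
  (Finset.range ⌈z⌉₊).filter fun p => p.Prime ∧ (p : ℝ) < z

/-- `P_z`, the product of all primes `p < z`. -/
noncomputable def Pz (z : ℝ) : ℕ := ∏ p ∈ primesLt z, p

open Classical in
/-- `S(X)`: the number of naturals `1 ≤ x ≤ X` with `gcd(x, ⌊P(x)⌋) = 1`. -/
noncomputable def S (P : Polynomial ℝ) (X : ℝ) : ℕ :=
  ((Finset.Icc 1 ⌊X⌋₊).filter fun x => Int.gcd (x : ℤ) ⌊P.eval (x : ℝ)⌋ = 1).card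

open Classical in
/-- `A_d(X)`: the set of naturals `1 ≤ x ≤ X` with `d ∣ x` and `d ∣ ⌊P(x)⌋`. -/
noncomputable def AP (P : Polynomial ℝ) (d : ℕ) (X : ℝ) : Finset ℕ :=
  (Finset.Icc 1 ⌊X⌋₊).filter fun x => (d : ℤ) ∣ (x : ℤ) ∧ (d : ℤ) ∣ ⌊P.eval (x : ℝ)⌋

open Classical in
/-- `S(X, z)`: the number of naturals `1 ≤ x ≤ X` with `gcd(gcd(x, ⌊P(x)⌋), P_z) = 1`. -/
noncomputable def S2 (P : Polynomial ℝ) (X z : ℝ) : ℕ :=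
  ((Finset.Icc 1 ⌊X⌋₊).filter fun x =>
    Nat.gcd (Int.gcd (x : ℤ) ⌊P.eval (x : ℝ)⌋) (Pz z) = 1).card

/-- `z = X ^ (c / log log X)` with `c = 1/(2(A+1))`. -/
noncomputable def zf (A X : ℝ) : ℝ := X ^ ((1 / (2 * (A + 1))) / Real.log (Real.log X))

/-!
If the exponential sum of a polynomial phase is large, Weyl differencing together with a recurrence
argument puts the leading coefficient close to a rational with small denominator `q`. Up to a
partial summation the leading term is then a function of `y` modulo `q`, and expanding it in
additive characters removes it at the price of a shift of the linear coefficient by a multiple of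
`1 / q`. Descending on the degree, the coefficient of `x` itself is well approximated by a rational
with small denominator, contrary to its being non-Liouville. So the exponential sums are small, and
testing against the Fejér kernel gives `#(AP P d X) ≈ X / d ^ 2`, uniformly for `d` up to `X`
divided by a power of `log X`.

Möbius inversion over the divisors of `primorial z`, with `z = log (log X)`, yields the main term.
An integer surviving this sieve but not counted by `S P X` has `gcd(x, ⌊P(x)⌋)` divisible by a prime
above `z`: medium primes are handled by the same count of `AP P d X`, and the primes within a power
of `log X` of `X` by Chebyshev's bound for the number of primes.
-/

open scoped FourierTransform fwdDiff ArithmeticFunction.Moebius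

section UnitCircle

lemma norm_unitAddCircle_le_half (x : UnitAddCircle) : ‖x‖ ≤ 1 / 2 := by
  simpa using AddCircle.norm_le_half_period (p := (1 : ℝ)) (x := x) one_ne_zero

lemma norm_coe_unitAddCircle_eq_abs {x : ℝ} (hx : |x| ≤ 1 / 2) : ‖(x : UnitAddCircle)‖ = |x| :=
  (AddCircle.norm_coe_eq_abs_iff (1 : ℝ) one_ne_zero).2 (by simpa using hx)

lemma le_norm_coe_unitAddCircle {x η : ℝ} (h₁ : η ≤ |x|) (h₂ : |x| ≤ 1 - η) :
    η ≤ ‖(x : UnitAddCircle)‖ := by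
  rw [UnitAddCircle.norm_eq]
  rcases eq_or_ne (round x) 0 with h₀ | h₀
  · simpa [h₀] using h₁
  · have : (1 : ℝ) ≤ |(round x : ℝ)| := mod_cast Int.one_le_abs h₀
    have := abs_sub_abs_le_abs_sub (round x : ℝ) x
    rw [abs_sub_comm x]
    linarith

lemma norm_nsmul_coe_unitAddCircle (n : ℕ) (x : ℝ) :
    ‖n • (x : UnitAddCircle)‖ = ‖((n * x : ℝ) : UnitAddCircle)‖ := by
  rw [← AddCircle.coe_nsmul, nsmul_eq_mul]

lemma coe_sub_intCast_unitAddCircle (x : ℝ) (n : ℤ) :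
    ((x - n : ℝ) : UnitAddCircle) = x := by
  rw [AddCircle.coe_sub, sub_eq_self, AddCircle.coe_eq_zero_iff]
  exact ⟨n, by simp⟩

lemma norm_nsmul_unitAddCircle_eq {n : ℕ} {γ : UnitAddCircle} (h : n * ‖γ‖ ≤ 1 / 2) :
    ‖n • γ‖ = n * ‖γ‖ := by
  induction γ using QuotientAddGroup.induction_on with | H x
  change n * ‖(x : UnitAddCircle)‖ ≤ 1 / 2 at h
  change ‖n • (x : UnitAddCircle)‖ = n * ‖(x : UnitAddCircle)‖
  rw [UnitAddCircle.norm_eq] at h ⊢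
  rw [← coe_sub_intCast_unitAddCircle x (round x), norm_nsmul_coe_unitAddCircle,
    norm_coe_unitAddCircle_eq_abs] <;> rw [abs_mul, Nat.abs_cast]
  exact h

lemma fourierChar_intCast (n : ℤ) : 𝐞 (n : ℝ) = 1 := by
  ext
  rw [fourierChar_apply, Circle.coe_one, Complex.exp_eq_one_iff]
  exact ⟨n, by push_cast; ring⟩

lemma fourierChar_natCast_mul (n : ℕ) (x : ℝ) : 𝐞 (n * x) = 𝐞 x ^ n := by
  rw [← nsmul_eq_mul, AddChar.map_nsmul_eq_pow]

lemma fourierChar_sub_round (x : ℝ) : 𝐞 (x - round x) = 𝐞 x := by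
  rw [AddChar.map_sub_eq_div, fourierChar_intCast, div_one]

lemma norm_fourierChar_sub_one (x : ℝ) : ‖(𝐞 x : ℂ) - 1‖ = 2 * |sin (π * x)| := by
  rw [fourierChar_apply, mul_comm, Complex.norm_exp_I_mul_ofReal_sub_one, norm_eq_abs, abs_mul,
    abs_two]
  ring_nf

lemma norm_fourierChar_sub_le (x y : ℝ) : ‖(𝐞 x : ℂ) - 𝐞 y‖ ≤ 2 * π * |x - y| := by
  have factor : (𝐞 x : ℂ) - 𝐞 y = 𝐞 y * (𝐞 (x - y) - 1) := by
    rw [mul_sub, ← Circle.coe_mul, ← AddChar.map_add_eq_mul, add_sub_cancel, mul_one]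
  rw [factor, norm_mul, Circle.norm_coe, one_mul, norm_fourierChar_sub_one, mul_assoc]
  gcongr
  exact abs_sin_le_abs.trans_eq (by rw [abs_mul, abs_of_pos pi_pos])

lemma four_mul_norm_le_norm_fourierChar_sub_one (x : ℝ) :
    4 * ‖(x : UnitAddCircle)‖ ≤ ‖(𝐞 x : ℂ) - 1‖ := by
  rw [UnitAddCircle.norm_eq, ← fourierChar_sub_round, norm_fourierChar_sub_one]
  have ht : |π * (x - round x)| = π * |x - round x| := by rw [abs_mul, abs_of_pos pi_pos]
  have jordan := mul_abs_le_abs_sin (x := π * (x - round x)) (by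
    rw [ht]; nlinarith [pi_pos, abs_sub_round x])
  rw [ht, ← mul_assoc, div_mul_cancel₀ _ pi_ne_zero] at jordan
  linarith

lemma norm_sum_fourierChar_le {ι : Type*} (s : Finset ι) (f : ι → ℝ) :
    ‖∑ i ∈ s, (𝐞 (f i) : ℂ)‖ ≤ #s :=
  (norm_sum_le _ _).trans_eq (by simp only [Circle.norm_coe, sum_const, nsmul_eq_mul, mul_one])

lemma norm_mul_norm_geom_sum_fourierChar_le (β c : ℝ) (N : ℕ) :
    2 * ‖(β : UnitAddCircle)‖ * ‖∑ y ∈ range N, (𝐞 (c + y * β) : ℂ)‖ ≤ 1 := by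
  have factor : ∑ y ∈ range N, (𝐞 (c + y * β) : ℂ) = 𝐞 c * ∑ y ∈ range N, (𝐞 β : ℂ) ^ y := by
    rw [mul_sum]
    refine sum_congr rfl fun y _ => ?_
    rw [AddChar.map_add_eq_mul, fourierChar_natCast_mul, Circle.coe_mul, Circle.coe_pow]
  rw [factor, norm_mul, Circle.norm_coe, one_mul]
  have geom : ‖∑ y ∈ range N, (𝐞 β : ℂ) ^ y‖ * ‖(𝐞 β : ℂ) - 1‖ ≤ 2 := by
    rw [← norm_mul, geom_sum_mul]
    refine (norm_sub_le _ _).trans ?_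
    rw [norm_pow, Circle.norm_coe]
    norm_num
  nlinarith [four_mul_norm_le_norm_fourierChar_sub_one β,
    norm_nonneg (∑ y ∈ range N, (𝐞 β : ℂ) ^ y)]

end UnitCircle

section Recurrence

variable {K ε : ℝ} {N q W : ℕ} {T : Finset ℕ}

lemma exists_add_mul_mem_of_lt_card {n : ℕ} (hT : T ⊆ range N) (hq : 1 ≤ q)
    (hn : q * (N / W + 1) * n < #T) :
    ∃ a ∈ T, ∃ m ≥ n, a + q * m ∈ T ∧ (a + q * m) / W = a / W := by
  obtain ⟨⟨r, w⟩, -, hlt⟩ := exists_lt_card_fiber_of_mul_lt_card_of_maps_to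
    (s := T) (t := range q ×ˢ range (N / W + 1)) (f := fun h => (h % q, h / W)) (n := n)
    (fun h hh => by
      simp only [mem_product, mem_range]
      exact ⟨Nat.mod_lt _ hq, Nat.lt_succ_of_le (Nat.div_le_div_right (mem_range.1 (hT hh)).le)⟩)
    (by simpa [card_product] using hn)
  set F := T.filter fun h => (h % q, h / W) = (r, w) with hF
  have hne : F.Nonempty := card_pos.1 (by omega)
  have hmem : ∀ x ∈ F, x ∈ T ∧ x % q = r ∧ x / W = w := fun x hx => by
    rwa [hF, mem_filter, Prod.mk.injEq] at hx
  set a := F.min' hne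
  set b := F.max' hne
  obtain ⟨haT, har, haw⟩ := hmem a (F.min'_mem hne)
  obtain ⟨hbT, hbr, hbw⟩ := hmem b (F.max'_mem hne)
  have hcard : #F ≤ #(Icc (a / q) (b / q)) := by
    refine card_le_card_of_injOn (· / q) (fun x hx => ?_) fun x hx y hy (hxy : x / q = y / q) => ?_
    · simp only [coe_Icc, Set.mem_Icc]
      exact ⟨Nat.div_le_div_right (F.min'_le x hx), Nat.div_le_div_right (F.le_max' x hx)⟩
    · rw [← Nat.div_add_mod x q, ← Nat.div_add_mod y q, (hmem x hx).2.1, (hmem y hy).2.1, hxy]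
  rw [Nat.card_Icc] at hcard
  have hle : a / q ≤ b / q := Nat.div_le_div_right (F.min'_le b (F.max'_mem hne))
  have hb : a + q * (b / q - a / q) = b := by
    have ha := Nat.div_add_mod a q
    have hb := Nat.div_add_mod b q
    have := Nat.mul_le_mul_left q hle
    rw [Nat.mul_sub]
    omega
  exact ⟨a, haT, b / q - a / q, by omega, hb.symm ▸ hbT, by rw [hb, hbw, haw]⟩

lemma exists_add_mul_mem_of_dense (hT : T ⊆ range N) (hq : 1 ≤ q) (hK : 0 < K)
    (hWN : W ≤ N) (hW : 0 < W) (hTc : N ≤ K * #T) :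
    ∃ a ∈ T, ∃ m : ℕ, W ≤ 2 * K * q * (m + 1) ∧ q * m < W ∧ a + q * m ∈ T := by
  have hW0 : (0 : ℝ) < W := mod_cast hW
  have hWN' : (W : ℝ) ≤ N := mod_cast hWN
  obtain ⟨n, hn⟩ : ∃ n : ℕ, ⌈(W : ℝ) / (2 * K * q)⌉₊ = n + 1 :=
    Nat.exists_eq_succ_of_ne_zero (Nat.ceil_pos.2 (by positivity)).ne'
  have hnW : W ≤ 2 * K * q * (n + 1) := by
    have := Nat.le_ceil ((W : ℝ) / (2 * K * q))
    rwa [hn, div_le_iff₀' (by positivity), Nat.cast_succ] at this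
  have hnW' : 2 * K * q * n < W := by
    have := Nat.ceil_lt_add_one (a := (W : ℝ) / (2 * K * q)) (by positivity)
    rwa [hn, Nat.cast_succ, add_lt_add_iff_right, lt_div_iff₀' (by positivity)] at this
  have hblocks : ((N / W : ℕ) : ℝ) + 1 ≤ 2 * N / W := by
    have : (1 : ℝ) ≤ N / W := (one_le_div hW0).2 hWN'
    linarith [Nat.cast_div_le (α := ℝ) (m := N) (n := W), mul_div_assoc 2 (N : ℝ) W]
  have hcount : (q * (N / W + 1) * n : ℕ) < #T := by
    have scaled : K * (q * (N / W + 1) * n : ℕ) < K * #T :=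
      calc K * (q * (N / W + 1) * n : ℕ) ≤ K * (q * (2 * N / W) * n) := by push_cast; gcongr
        _ = 2 * K * q * n * (N / W) := by ring
        _ < W * (N / W) := mul_lt_mul_of_pos_right hnW' (div_pos (hW0.trans_le hWN') hW0)
        _ = N := by field_simp
        _ ≤ K * #T := hTc
    exact Nat.cast_lt.1 (lt_of_mul_lt_mul_left scaled hK.le)
  obtain ⟨a, ha, m, hnm, hm, hdiv⟩ := exists_add_mul_mem_of_lt_card hT hq hcount
  refine ⟨a, ha, m, hnW.trans (by gcongr), ?_, hm⟩
  have h₁ := Nat.div_add_mod a W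
  have h₂ := Nat.div_add_mod (a + q * m) W
  rw [hdiv] at h₂
  have := Nat.mod_lt (a + q * m) hW
  omega

variable {β : UnitAddCircle}

lemma exists_norm_nsmul_le_two_mul (hT : T ⊆ range N) (hK : 1 ≤ K) (hN : 3 * K ≤ N)
    (hTc : N ≤ K * #T) (hβ : ∀ h ∈ T, ‖h • β‖ ≤ ε) :
    ∃ q : ℕ, 1 ≤ q ∧ q ≤ 3 * K ∧ ‖q • β‖ ≤ 2 * ε := by
  have hW : (⌊2 * K⌋₊ : ℝ) ≤ 2 * K := Nat.floor_le (by linarith)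
  have hW' : 2 * K < (⌊2 * K⌋₊ + 1 : ℕ) := mod_cast Nat.lt_floor_add_one _
  obtain ⟨a, ha, m, hWm, hmW, ham⟩ := exists_add_mul_mem_of_dense (q := 1) (W := ⌊2 * K⌋₊ + 1)
    hT le_rfl (by linarith) (by rify; linarith) (Nat.succ_pos _) hTc
  rw [one_mul] at hmW ham
  have hm : (0 : ℝ) < m := by
    push_cast at hWm hW'
    nlinarith
  refine ⟨m, Nat.cast_pos.1 hm, ?_, ?_⟩
  · have : (m : ℝ) ≤ ⌊2 * K⌋₊ := mod_cast Nat.lt_succ_iff.1 hmW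
    linarith
  · calc ‖m • β‖ = ‖(a + m) • β - a • β‖ := by rw [add_nsmul, add_sub_cancel_left]
      _ ≤ ‖(a + m) • β‖ + ‖a • β‖ := norm_sub_le _ _
      _ ≤ 2 * ε := by linarith [hβ _ ha, hβ _ ham]

lemma norm_nsmul_mul_le (hT : T ⊆ range N) (hK : 0 < K) (hTc : N ≤ K * #T)
    (hβ : ∀ h ∈ T, ‖h • β‖ ≤ ε) (hq : 1 ≤ q) (hWN : W ≤ N) (hW : 4 * K * q ≤ W)
    (hqW : 2 * ‖q • β‖ * W ≤ q) : ‖q • β‖ * W ≤ 8 * K * q * ε := by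
  have hq' : (1 : ℝ) ≤ q := mod_cast hq
  have hW0 : (0 : ℝ) < W := by nlinarith
  obtain ⟨a, ha, m, hWm, hmW, ham⟩ :=
    exists_add_mul_mem_of_dense hT hq hK hWN (mod_cast hW0) hTc
  have hmW' : (q : ℝ) * m ≤ W := mod_cast hmW.le
  have hWm' : W ≤ 4 * K * (q * m) := by linarith
  have hsmall : m * ‖q • β‖ ≤ 1 / 2 := by
    have : (q : ℝ) * (m * ‖q • β‖) ≤ q * (1 / 2) := by nlinarith [norm_nonneg (q • β)]
    exact le_of_mul_le_mul_left this (by linarith)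
  have hdiff : m * ‖q • β‖ ≤ 2 * ε :=
    calc m * ‖q • β‖ = ‖(a + q * m) • β - a • β‖ := by
          rw [add_nsmul, add_sub_cancel_left, mul_nsmul, norm_nsmul_unitAddCircle_eq hsmall]
      _ ≤ ‖(a + q * m) • β‖ + ‖a • β‖ := norm_sub_le _ _
      _ ≤ 2 * ε := by linarith [hβ _ ha, hβ _ ham]
  calc ‖q • β‖ * W ≤ ‖q • β‖ * (4 * K * (q * m)) := by gcongr
    _ = 4 * K * q * (m * ‖q • β‖) := by ring
    _ ≤ 4 * K * q * (2 * ε) := by gcongr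
    _ = 8 * K * q * ε := by ring

theorem exists_norm_nsmul_le_of_dense (hT : T ⊆ range N) (hK : 1 ≤ K) (hε : 32 * K * ε < 1)
    (hN : 12 * K ^ 2 ≤ N) (hTc : N ≤ K * #T) (hβ : ∀ h ∈ T, ‖h • β‖ ≤ ε) :
    ∃ q : ℕ, 1 ≤ q ∧ q ≤ 3 * K ∧ ‖q • β‖ ≤ 24 * K ^ 2 * ε / N := by
  have hK0 : 0 < K := by linarith
  have hN0 : (0 : ℝ) < N := by nlinarith
  obtain ⟨q, hq, hqK, hqε⟩ := exists_norm_nsmul_le_two_mul hT hK (by nlinarith) hTc hβ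
  refine ⟨q, hq, hqK, ?_⟩
  have hq' : (1 : ℝ) ≤ q := mod_cast hq
  have hscale : ∀ W : ℕ, W ≤ N → 4 * K * q ≤ W → 2 * ‖q • β‖ * W ≤ q →
      ‖q • β‖ * W ≤ 8 * K * q * ε := fun W => norm_nsmul_mul_le hT hK0 hTc hβ hq
  have hε0 : 0 ≤ ε := by linarith [norm_nonneg (q • β)]
  set s := ‖q • β‖
  rcases le_or_gt (2 * s * N) q with hsN | hsN
  · rw [le_div_iff₀ hN0]
    calc s * N ≤ 8 * K * q * ε := hscale N le_rfl (by nlinarith) hsN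
      _ ≤ 8 * K * (3 * K) * ε := by gcongr
      _ = 24 * K ^ 2 * ε := by ring
  -- Otherwise the scale `W = ⌊q / (2s)⌋` would force `s * W` to be both small and about `q / 2`.
  · exfalso
    have hs1 : 0 < s := by
      by_contra! h
      nlinarith
    set W := ⌊(q : ℝ) / (2 * s)⌋₊
    have hW : (W : ℝ) * (2 * s) ≤ q :=
      (le_div_iff₀ (by positivity)).1 (Nat.floor_le (by positivity))
    have hW' : (q : ℝ) < (W + 1) * (2 * s) :=
      (div_lt_iff₀ (by positivity)).1 (Nat.lt_floor_add_one _)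
    have hWN : (W : ℝ) ≤ N :=
      le_of_mul_le_mul_right (by linarith : (W : ℝ) * (2 * s) ≤ N * (2 * s)) (by positivity)
    have hKs : 32 * K * s < 2 := by nlinarith
    have hWq : 8 * K * q < W + 1 := by
      refine lt_of_mul_lt_mul_right (a := 2 * s) ?_ (by positivity)
      nlinarith
    have hW4 : 4 * K * q ≤ W := by nlinarith
    have := hscale W (mod_cast hWN) hW4 (by linarith)
    have : (1 : ℝ) ≤ W := by nlinarith
    nlinarith

end Recurrence

section ForwardDifference

lemma fwdDiff_eq_sum_fwdDiff_one {G : Type*} [AddCommGroup G] (f : ℕ → G) (h : ℕ) :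
    Δ_[h] f = ∑ i ∈ range h, fun y => Δ_[1] f (y + i) := by
  ext y
  rw [Finset.sum_apply]
  exact (sum_range_sub (fun i => f (y + i)) h).symm

lemma fwdDiff_iter_fwdDiff_of_eq_const {G : Type*} [AddCommGroup G] {f : ℕ → G} {β : G} {k : ℕ}
    (hf : (Δ_[1])^[k + 1] f = fun _ => β) (h : ℕ) : (Δ_[1])^[k] (Δ_[h] f) = fun _ => h • β := by
  ext y
  rw [fwdDiff_eq_sum_fwdDiff_one, fwdDiff_iter_finsetSum, Finset.sum_apply]
  simp_rw [fwdDiff_iter_comp_add, ← Function.iterate_succ_apply, hf]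
  simp

lemma eq_add_mul_of_fwdDiff_eq_const {f : ℕ → ℝ} {β : ℝ} (hf : Δ_[1] f = fun _ => β) (y : ℕ) :
    f y = f 0 + y * β := by
  have := congrFun (fwdDiff_iter_fwdDiff_of_eq_const (k := 0) hf y) 0
  simp only [Function.iterate_zero, id_eq, fwdDiff, zero_add, nsmul_eq_mul] at this
  linarith

lemma fwdDiff_iter_comp_natCast (g : ℝ → ℝ) (k : ℕ) :
    (Δ_[1])^[k] (fun y : ℕ => g y) = fun y : ℕ => (Δ_[1])^[k] g (y : ℝ) := by
  ext y
  simp [fwdDiff_iter_eq_sum_shift]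

lemma fwdDiff_iter_polynomial {P : Polynomial ℝ} {k : ℕ} (hP : P.natDegree ≤ k) :
    (Δ_[1])^[k] (fun y : ℕ => P.eval (y : ℝ)) = fun _ => P.coeff k * k.factorial := by
  rw [fwdDiff_iter_comp_natCast fun x => P.eval x]
  ext y
  rcases hP.lt_or_eq with hlt | rfl
  · rw [Polynomial.fwdDiff_iter_eq_zero_of_degree_lt hlt, P.coeff_eq_zero_of_natDegree_lt hlt]
    simp
  · rw [Polynomial.fwdDiff_iter_degree_eq_factorial]
    simp

end ForwardDifference

section WeylDifferencing

lemma sum_Ico_one_sum_range_succ_sub {M : Type*} [AddCommMonoid M] (F : ℕ → ℕ → M) (n : ℕ) :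
    ∑ h ∈ Ico 1 (n + 1), ∑ y ∈ range (n + 1 - h), F (y + h) y =
      ∑ h ∈ Ico 1 n, ∑ y ∈ range (n - h), F (y + h) y + ∑ y ∈ range n, F n y := by
  have peel : ∀ h ∈ Ico 1 (n + 1), ∑ y ∈ range (n + 1 - h), F (y + h) y =
      ∑ y ∈ range (n - h), F (y + h) y + F n (n - h) := fun h hh => by
    rw [mem_Ico] at hh
    rw [show n + 1 - h = n - h + 1 by omega, sum_range_succ, Nat.sub_add_cancel (by omega)]
  rw [sum_congr rfl peel, sum_add_distrib]
  congr 1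
  · cases n with
    | zero => simp
    | succ m => rw [sum_Ico_succ_top (by omega)]; simp
  · rw [sum_Ico_eq_sum_range, Nat.add_sub_cancel, ← sum_range_reflect]
    refine sum_congr rfl fun y hy => ?_
    rw [mem_range] at hy
    rw [show n - (1 + (n - 1 - y)) = y by omega]

lemma norm_sum_fourierChar_sq_eq (f : ℕ → ℝ) (N : ℕ) :
    ‖∑ y ∈ range N, (𝐞 (f y) : ℂ)‖ ^ 2 =
      N + 2 * (∑ h ∈ Ico 1 N, ∑ y ∈ range (N - h), (𝐞 (Δ_[h] f y) : ℂ)).re := by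
  simp only [fwdDiff]
  induction N with
  | zero => simp
  | succ n ih =>
    have last : ∑ y ∈ range n, (𝐞 (f n - f y) : ℂ) =
        𝐞 (f n) * (starRingEnd ℂ) (∑ y ∈ range n, (𝐞 (f y) : ℂ)) := by
      rw [map_sum, mul_sum]
      refine sum_congr rfl fun y _ => ?_
      rw [← Circle.coe_inv_eq_conj, ← Circle.coe_mul, AddChar.map_sub_eq_div, div_eq_mul_inv]
    have unit : Complex.normSq (𝐞 (f n)) = 1 := Circle.normSq_coe _
    rw [sum_Ico_one_sum_range_succ_sub (fun a b => (𝐞 (f a - f b) : ℂ)), sum_range_succ, last]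
    rw [← Complex.normSq_eq_norm_sq] at ih ⊢
    rw [Complex.normSq_add, ih, unit]
    simp only [Complex.add_re, Complex.mul_re, Complex.conj_re, Complex.conj_im]
    push_cast
    ring

lemma norm_sum_fourierChar_sq_le (f : ℕ → ℝ) (N : ℕ) :
    ‖∑ y ∈ range N, (𝐞 (f y) : ℂ)‖ ^ 2 ≤
      N + 2 * ∑ h ∈ Ico 1 N, ‖∑ y ∈ range (N - h), (𝐞 (Δ_[h] f y) : ℂ)‖ := by
  rw [norm_sum_fourierChar_sq_eq]
  gcongr
  exact (Complex.re_le_norm _).trans (norm_sum_le _ _)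

lemma le_card_filter_fwdDiff_sum (f : ℕ → ℝ) {N : ℕ} {K : ℝ} (hK : 2 ≤ K) (hN : 4 * K ^ 2 ≤ N)
    (hS : N / K ≤ ‖∑ y ∈ range N, (𝐞 (f y) : ℂ)‖) :
    (N : ℝ) ≤ 4 * K ^ 2 * #{h ∈ Ico 1 N |
      N / (8 * K ^ 2) ≤ ‖∑ y ∈ range (N - h), (𝐞 (Δ_[h] f y) : ℂ)‖} := by
  set A : ℕ → ℝ := fun h => ‖∑ y ∈ range (N - h), (𝐞 (Δ_[h] f y) : ℂ)‖
  set T := {h ∈ Ico 1 N | N / (8 * K ^ 2) ≤ A h}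
  have hN0 : (0 : ℝ) < N := by nlinarith
  have large : ∑ h ∈ T, A h ≤ #T * N := by
    rw [← nsmul_eq_mul]
    refine sum_le_card_nsmul _ _ _ fun h _ => (norm_sum_fourierChar_le _ _).trans ?_
    rw [card_range]
    exact mod_cast Nat.sub_le N h
  have small : ∑ h ∈ Ico 1 N with ¬ N / (8 * K ^ 2) ≤ A h, A h ≤ N * (N / (8 * K ^ 2)) := by
    refine (sum_le_card_nsmul _ _ (N / (8 * K ^ 2)) fun h hh =>
      (not_le.1 (mem_filter.1 hh).2).le).trans ?_
    rw [nsmul_eq_mul]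
    gcongr
    exact (card_filter_le _ _).trans (by simp)
  have split := sum_filter_add_sum_filter_not (Ico 1 N) (fun h => N / (8 * K ^ 2) ≤ A h) A
  have weyl : (N / K) ^ 2 ≤ N + 2 * (#T * N + N * (N / (8 * K ^ 2))) :=
    calc (N / K) ^ 2 ≤ ‖∑ y ∈ range N, (𝐞 (f y) : ℂ)‖ ^ 2 := by gcongr
      _ ≤ N + 2 * ∑ h ∈ Ico 1 N, A h := norm_sum_fourierChar_sq_le f N
      _ ≤ _ := by linarith
  have cleared : (N : ℝ) * N ≤ N * (K ^ 2 + 2 * K ^ 2 * #T + N / 4) :=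
    calc (N : ℝ) * N = K ^ 2 * (N / K) ^ 2 := by field_simp
      _ ≤ K ^ 2 * (N + 2 * (#T * N + N * (N / (8 * K ^ 2)))) := by gcongr
      _ = _ := by field_simp; ring
  linarith [le_of_mul_le_mul_left cleared hN0]

end WeylDifferencing

section LeadingCoefficient

lemma exists_common_of_forall_exists {T : Finset ℕ} {Q : ℝ} (hQ : 1 ≤ Q) {p : ℕ → ℕ → Prop}
    (h : ∀ t ∈ T, ∃ q : ℕ, 1 ≤ q ∧ q ≤ Q ∧ p t q) :
    ∃ q : ℕ, 1 ≤ q ∧ q ≤ Q ∧ ∃ T' ⊆ T, #T ≤ Q * #T' ∧ ∀ t ∈ T', p t q := by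
  choose! φ hφ₁ hφQ hφ using h
  have hQ0 : 0 < Q := by linarith
  obtain ⟨q, hq, hcard⟩ := exists_le_card_fiber_of_nsmul_le_card_of_maps_to
    (s := T) (t := Icc 1 ⌊Q⌋₊) (f := φ) (b := #T / Q)
    (fun t ht => mem_Icc.2 ⟨hφ₁ t ht, Nat.le_floor (hφQ t ht)⟩)
    (nonempty_Icc.2 (Nat.le_floor (by simpa using hQ)))
    (by
      rw [nsmul_eq_mul, Nat.card_Icc, Nat.add_sub_cancel]
      calc ⌊Q⌋₊ * (#T / Q) ≤ Q * (#T / Q) := by gcongr; exact Nat.floor_le hQ0.le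
        _ = #T := by field_simp)
  rw [mem_Icc, Nat.le_floor_iff hQ0.le] at hq
  refine ⟨q, hq.1, hq.2, T.filter (φ · = q), filter_subset _ _, (div_le_iff₀' hQ0).1 hcard, ?_⟩
  intro t ht
  obtain ⟨htT, rfl⟩ := mem_filter.1 ht
  exact hφ t htT

lemma exists_norm_nsmul_le_of_dense_of_forall {J : ℝ} {N C k : ℕ} {T : Finset ℕ}
    {β : UnitAddCircle} (hJ : 32 ≤ J) (hN : J ^ (2 * C + k + 4) < N) (hT : T ⊆ range N)
    (hTc : N ≤ J * #T)
    (hβ : ∀ h ∈ T, ∃ q : ℕ, 1 ≤ q ∧ q ≤ J ^ C ∧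
      ‖q • h • β‖ ≤ J ^ (C + k + 1) / (N : ℝ) ^ (k + 1)) :
    ∃ q : ℕ, 1 ≤ q ∧ q ≤ J ^ (2 * C + 2) ∧
      ‖q • β‖ ≤ J ^ (3 * C + k + 4) / (N : ℝ) ^ (k + 2) := by
  have hJ1 : 1 ≤ J := by linarith
  have hN0 : (0 : ℝ) < N := lt_trans (by positivity) hN
  obtain ⟨q, hq, hqJ, T', hT', hTT', hqβ⟩ := exists_common_of_forall_exists (one_le_pow₀ hJ1) hβ
  obtain ⟨r, hr, hrJ, hrβ⟩ := exists_norm_nsmul_le_of_dense (K := J ^ (C + 1)) (N := N) (T := T')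
    (ε := J ^ (C + k + 1) / (N : ℝ) ^ (k + 1)) (β := q • β) (hT'.trans hT) (one_le_pow₀ hJ1)
    (by
      have hN1 : (1 : ℝ) ≤ N := (one_le_pow₀ hJ1).trans hN.le
      rw [mul_div_assoc', div_lt_one (by positivity)]
      calc 32 * J ^ (C + 1) * J ^ (C + k + 1) ≤ J * J ^ (C + 1) * J ^ (C + k + 1) := by gcongr
        _ = J ^ (2 * C + k + 3) := by ring
        _ ≤ J ^ (2 * C + k + 4) := pow_le_pow_right₀ hJ1 (by omega)
        _ < N := hN
        _ ≤ N ^ (k + 1) := le_self_pow₀ hN1 (by omega))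
    (calc 12 * (J ^ (C + 1)) ^ 2 ≤ J * (J ^ (C + 1)) ^ 2 := by gcongr; linarith
      _ = J ^ (2 * C + 3) := by ring
      _ ≤ J ^ (2 * C + k + 4) := pow_le_pow_right₀ hJ1 (by omega)
      _ ≤ N := hN.le)
    (calc (N : ℝ) ≤ J * #T := hTc
      _ ≤ J * (J ^ C * #T') := by gcongr
      _ = J ^ (C + 1) * #T' := by ring)
    (fun h hh => by rw [smul_comm]; exact hqβ h hh)
  refine ⟨q * r, Nat.mul_pos hq hr, ?_, ?_⟩
  · push_cast
    calc (q : ℝ) * r ≤ J ^ C * (J * J ^ (C + 1)) := by gcongr; exact hrJ.trans (by gcongr; linarith)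
      _ = J ^ (2 * C + 2) := by ring
  · rw [mul_nsmul]
    calc ‖r • q • β‖ ≤ 24 * (J ^ (C + 1)) ^ 2 * (J ^ (C + k + 1) / N ^ (k + 1)) / N := hrβ
      _ ≤ J * (J ^ (C + 1)) ^ 2 * (J ^ (C + k + 1) / N ^ (k + 1)) / N := by gcongr; linarith
      _ = J ^ (3 * C + k + 4) / N ^ (k + 2) := by field_simp; ring

lemma norm_mul_le_of_fwdDiff_eq_const {K : ℝ} (hK : 0 < K) {f : ℕ → ℝ} {β : ℝ}
    (hf : Δ_[1] f = fun _ => β) {N : ℕ} (hN : 1 ≤ N)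
    (hS : N / K ≤ ‖∑ y ∈ range N, (𝐞 (f y) : ℂ)‖) : ‖(β : UnitAddCircle)‖ ≤ K / N := by
  have geom := norm_mul_norm_geom_sum_fourierChar_le β (f 0) N
  simp_rw [← eq_add_mul_of_fwdDiff_eq_const hf] at geom
  have hN0 : (0 : ℝ) < N := mod_cast hN
  rw [div_le_iff₀ hK] at hS
  rw [le_div_iff₀ hN0]
  nlinarith [norm_nonneg (β : UnitAddCircle)]

/-- The inverse theorem for exponential sums in degree `k` holds with exponent `C`: if a phase with
constant `k`-th difference `β` has an exponential sum of size at least `N / K`, then `β` is within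
`K ^ C / N ^ k` of a rational of denominator at most `K ^ C`, up to that denominator. -/
def HasWeylExponent (k C : ℕ) : Prop :=
  ∀ K : ℝ, 2 ≤ K → ∀ (f : ℕ → ℝ) (β : ℝ), ((Δ_[1])^[k] f = fun _ => β) →
    ∀ N : ℕ, 1 ≤ N → N / K ≤ ‖∑ y ∈ range N, (𝐞 (f y) : ℂ)‖ →
      ∃ q : ℕ, 1 ≤ q ∧ q ≤ K ^ C ∧ ‖q • (β : UnitAddCircle)‖ ≤ K ^ C / (N : ℝ) ^ k

lemma HasWeylExponent.exists_norm_nsmul_le_of_large_fwdDiff {k C : ℕ}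
    (hC : HasWeylExponent (k + 1) C)
    {J : ℝ} (hJ : 2 ≤ J) {f : ℕ → ℝ} {β : ℝ} (hf : (Δ_[1])^[k + 2] f = fun _ => β) {N h : ℕ}
    (hh : h < N) (hS : N / J ≤ ‖∑ y ∈ range (N - h), (𝐞 (Δ_[h] f y) : ℂ)‖) :
    ∃ q : ℕ, 1 ≤ q ∧ q ≤ J ^ C ∧
      ‖q • h • (β : UnitAddCircle)‖ ≤ J ^ (C + k + 1) / (N : ℝ) ^ (k + 1) := by
  have hle : ((N - h : ℕ) : ℝ) ≤ N := mod_cast Nat.sub_le N h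
  have hge : N / J ≤ (N - h : ℕ) :=
    hS.trans ((norm_sum_fourierChar_le _ _).trans_eq (by rw [card_range]))
  have hN0 : (0 : ℝ) < N := mod_cast (Nat.zero_le h).trans_lt hh
  obtain ⟨q, hq, hqJ, hqβ⟩ := hC J hJ _ _ (fwdDiff_iter_fwdDiff_of_eq_const hf h) (N - h)
    (by omega) (le_trans (by gcongr) hS)
  refine ⟨q, hq, hqJ, ?_⟩
  calc ‖q • h • (β : UnitAddCircle)‖ ≤ J ^ C / ((N - h : ℕ) : ℝ) ^ (k + 1) := by
        rwa [AddCircle.coe_nsmul] at hqβ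
    _ ≤ J ^ C / (N / J) ^ (k + 1) := by gcongr
    _ = J ^ (C + k + 1) / N ^ (k + 1) := by
        rw [div_pow, div_div_eq_mul_div, ← pow_add, add_assoc]

lemma HasWeylExponent.succ {k C : ℕ} (hC : HasWeylExponent (k + 1) C) :
    HasWeylExponent (k + 2) (5 * ((2 * C + k + 4) * (k + 2))) := by
  intro K hK f β hf N hN hS
  set E := (2 * C + k + 4) * (k + 2) with hE
  have hE2 : 2 * (2 * C + k + 4) ≤ E := by rw [hE, mul_comm]; gcongr; omega
  set J := K ^ 5 with hJ
  rw [pow_mul, ← hJ]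
  have hJ8 : 8 * K ^ 2 ≤ J := by
    rw [hJ, show K ^ 5 = K ^ 3 * K ^ 2 by ring]
    gcongr
    exact (by norm_num : (8 : ℝ) = 2 ^ 3).trans_le (by gcongr)
  have hJ32 : 32 ≤ J := (by norm_num : (32 : ℝ) = 2 ^ 5).trans_le (by rw [hJ]; gcongr)
  have hJ1 : 1 ≤ J := by linarith
  have hN0 : (0 : ℝ) < N := mod_cast hN
  rcases le_or_gt (N : ℝ) (J ^ (2 * C + k + 4)) with hNJ | hNJ
  · refine ⟨1, le_rfl, by simpa using one_le_pow₀ hJ1, ?_⟩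
    rw [le_div_iff₀ (by positivity)]
    calc ‖1 • (β : UnitAddCircle)‖ * N ^ (k + 2) ≤ 1 * (J ^ (2 * C + k + 4)) ^ (k + 2) := by
          gcongr
          exact (norm_unitAddCircle_le_half _).trans (by norm_num)
      _ = J ^ E := by rw [one_mul, ← pow_mul]
  have hK4 : 4 * K ^ 2 ≤ J := by nlinarith
  have hJN : J ≤ N := (le_self_pow₀ hJ1 (by omega)).trans hNJ.le
  have hTc := le_card_filter_fwdDiff_sum f hK (hK4.trans hJN) hS
  obtain ⟨q, hq, hqJ, hqβ⟩ := exists_norm_nsmul_le_of_dense_of_forall (β := (β : UnitAddCircle))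
    hJ32 hNJ (fun h hh => mem_range.2 (mem_Ico.1 (mem_filter.1 hh).1).2)
    (hTc.trans (by gcongr)) (fun h hh => by
      obtain ⟨hh, hS⟩ := mem_filter.1 hh
      exact hC.exists_norm_nsmul_le_of_large_fwdDiff (by linarith) hf (mem_Ico.1 hh).2
        (le_trans (by gcongr) hS))
  exact ⟨q, hq, hqJ.trans (pow_le_pow_right₀ hJ1 (by omega)), hqβ.trans (by gcongr; omega)⟩

theorem exists_hasWeylExponent (k : ℕ) : ∃ C, HasWeylExponent (k + 1) C := by
  induction k with
  | zero =>
    refine ⟨1, fun K hK f β hf N hN hS => ⟨1, le_rfl, by norm_num; linarith, ?_⟩⟩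
    simpa using norm_mul_le_of_fwdDiff_eq_const (by linarith) hf hN hS
  | succ k ih =>
    obtain ⟨C, hC⟩ := ih
    exact ⟨_, hC.succ⟩

end LeadingCoefficient

section LinearCoefficient

lemma norm_sum_mul_sub_sum_mul_le (F G : ℕ → ℂ) {B : ℝ} {N : ℕ}
    (hB : ∀ n ≤ N, ‖∑ y ∈ range n, F y‖ ≤ B) :
    ‖∑ y ∈ range N, F y * G y - (∑ y ∈ range N, F y) * G N‖ ≤
      B * ∑ y ∈ range N, ‖G (y + 1) - G y‖ := by
  induction N with
  | zero => simp
  | succ n ih =>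
    have peel : ∑ y ∈ range (n + 1), F y * G y - (∑ y ∈ range (n + 1), F y) * G (n + 1) =
        (∑ y ∈ range n, F y * G y - (∑ y ∈ range n, F y) * G n) -
          (∑ y ∈ range (n + 1), F y) * (G (n + 1) - G n) := by
      rw [sum_range_succ, sum_range_succ F]
      ring
    rw [peel, sum_range_succ (fun y => ‖G (y + 1) - G y‖), mul_add]
    refine (norm_sub_le _ _).trans (add_le_add (ih fun m hm => hB m (by omega)) ?_)
    rw [norm_mul]
    gcongr
    exact hB _ le_rfl

lemma norm_sum_mul_fourierChar_le (F : ℕ → ℂ) (g : ℕ → ℝ) {V B : ℝ} {N : ℕ}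
    (hB : ∀ n ≤ N, ‖∑ y ∈ range n, F y‖ ≤ B) (hV : ∑ y ∈ range N, |g (y + 1) - g y| ≤ V) :
    ‖∑ y ∈ range N, F y * 𝐞 (g y)‖ ≤ B * (1 + 2 * π * V) := by
  have hB0 : 0 ≤ B := (norm_nonneg _).trans (hB 0 (Nat.zero_le N))
  have variation : ∑ y ∈ range N, ‖(𝐞 (g (y + 1)) : ℂ) - 𝐞 (g y)‖ ≤ 2 * π * V :=
    calc _ ≤ ∑ y ∈ range N, 2 * π * |g (y + 1) - g y| :=
          sum_le_sum fun y _ => norm_fourierChar_sub_le _ _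
      _ = 2 * π * ∑ y ∈ range N, |g (y + 1) - g y| := (mul_sum _ _ _).symm
      _ ≤ 2 * π * V := by gcongr
  have boundary : ‖(∑ y ∈ range N, F y) * 𝐞 (g N)‖ ≤ B := by
    rw [norm_mul, Circle.norm_coe, mul_one]
    exact hB N le_rfl
  calc ‖∑ y ∈ range N, F y * 𝐞 (g y)‖
      ≤ ‖∑ y ∈ range N, F y * 𝐞 (g y) - (∑ y ∈ range N, F y) * 𝐞 (g N)‖ +
          ‖(∑ y ∈ range N, F y) * 𝐞 (g N)‖ := norm_le_norm_sub_add _ _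
    _ ≤ B * (2 * π * V) + B := by
        gcongr
        exact (norm_sum_mul_sub_sum_mul_le F (fun y => (𝐞 (g y) : ℂ)) hB).trans (by gcongr)
    _ = B * (1 + 2 * π * V) := by ring

lemma sum_abs_mul_pow_sub (θ : ℝ) {m : ℕ} (hm : m ≠ 0) (N : ℕ) :
    ∑ y ∈ range N, |θ * ((y + 1 : ℕ) : ℝ) ^ m - θ * (y : ℝ) ^ m| = |θ| * N ^ m := by
  have step : ∀ y : ℕ, |θ * ((y + 1 : ℕ) : ℝ) ^ m - θ * (y : ℝ) ^ m| =
      |θ| * ((y + 1 : ℕ) : ℝ) ^ m - |θ| * (y : ℝ) ^ m := fun y => by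
    rw [← mul_sub, abs_mul, ← mul_sub, abs_of_nonneg (a := ((y + 1 : ℕ) : ℝ) ^ m - (y : ℝ) ^ m)]
    rw [sub_nonneg]
    gcongr
    omega
  simp_rw [step]
  rw [sum_range_sub (fun y : ℕ => |θ| * (y : ℝ) ^ m)]
  simp [hm]

lemma stdAddChar_intCast_eq_fourierChar {q : ℕ} [NeZero q] (j : ℤ) :
    ZMod.stdAddChar (j : ZMod q) = (𝐞 (j / q) : ℂ) := by
  rw [ZMod.stdAddChar_coe, Real.fourierChar_apply]
  push_cast
  ring_nf

lemma norm_sum_mul_comp_le_of_forall_stdAddChar {ι : Type*} {q : ℕ} [NeZero q] {φ : ZMod q → ℂ}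
    (hφ : ∀ a, ‖φ a‖ ≤ 1) (s : Finset ι) (F : ι → ℂ) (g : ι → ZMod q) {B : ℝ}
    (hB : ∀ t : ZMod q, ‖∑ i ∈ s, F i * ZMod.stdAddChar (t * g i)‖ ≤ B) :
    ‖∑ i ∈ s, F i * φ (g i)‖ ≤ q * B := by
  have coeff_le : ∀ t, ‖(q : ℂ)⁻¹ * ZMod.dft φ t‖ ≤ 1 := fun t => by
    rw [norm_mul, norm_inv, Complex.norm_natCast, ZMod.dft_apply]
    refine inv_mul_le_one_of_le₀ ((norm_sum_le_of_le _ (n := fun _ => (1 : ℝ)) fun a _ => ?_).trans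
      (by simp)) (Nat.cast_nonneg q)
    rw [smul_eq_mul, norm_mul, AddChar.norm_apply, one_mul]
    exact hφ a
  have inversion : ∀ a, φ a =
      ∑ t, ((q : ℂ)⁻¹ * ZMod.dft φ t) * ZMod.stdAddChar (t * a) := fun a => by
    conv_lhs => rw [← ZMod.dft.symm_apply_apply φ, ZMod.invDFT_apply]
    rw [smul_eq_mul, mul_sum]
    exact sum_congr rfl fun t _ => by rw [smul_eq_mul]; ring
  have swap : ∑ i ∈ s, F i * φ (g i) =
      ∑ t, ((q : ℂ)⁻¹ * ZMod.dft φ t) * ∑ i ∈ s, F i * ZMod.stdAddChar (t * g i) := by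
    simp_rw [mul_sum]
    rw [sum_comm]
    refine sum_congr rfl fun i _ => ?_
    rw [inversion, mul_sum]
    exact sum_congr rfl fun t _ => by ring
  rw [swap]
  refine (norm_sum_le_of_le _ (n := fun _ => B) fun t _ => ?_).trans (by simp)
  rw [norm_mul]
  calc _ ≤ 1 * B := by gcongr; exacts [coeff_le t, hB t]
    _ = B := one_mul B

lemma exists_le_norm_sum_fourierChar_add_div {q : ℕ} [NeZero q] (f : ℕ → ℝ) (a : ℤ) {θ V : ℝ}
    {m N : ℕ} (hm : m ≠ 0) (hθ : |θ| * N ^ m ≤ V) :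
    ∃ n ≤ N, ∃ t : ℕ, ‖∑ y ∈ range N, (𝐞 (f y + (a / q + θ) * y ^ m) : ℂ)‖ ≤
      q * ‖∑ y ∈ range n, (𝐞 (f y + t * y / q) : ℂ)‖ * (1 + 2 * π * V) := by
  obtain ⟨⟨n, t⟩, hnt, hmax⟩ := exists_max_image (range (N + 1) ×ˢ (univ : Finset (ZMod q)))
    (fun p => ‖∑ y ∈ range p.1, (𝐞 (f y + p.2.val * y / q) : ℂ)‖) ⟨(0, 0), by simp⟩
  refine ⟨n, Nat.lt_succ_iff.1 (mem_range.1 (mem_product.1 hnt).1), t.val, ?_⟩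
  have linear : ∀ (t : ZMod q) (y : ℕ), (𝐞 (f y) : ℂ) * ZMod.stdAddChar (t * (y : ZMod q)) =
      𝐞 (f y + t.val * y / q) := fun t y => by
    have := stdAddChar_intCast_eq_fourierChar (q := q) (t.val * y)
    push_cast [ZMod.natCast_zmod_val] at this
    rw [this, ← Circle.coe_mul, ← AddChar.map_add_eq_mul]
  have rational : ∀ y : ℕ, ZMod.stdAddChar ((a : ZMod q) * (y : ZMod q) ^ m) =
      (𝐞 (a * y ^ m / q) : ℂ) := fun y => by
    have := stdAddChar_intCast_eq_fourierChar (q := q) (a * y ^ m)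
    push_cast at this
    exact this
  have partialSums : ∀ n' ≤ N, ‖∑ y ∈ range n', (𝐞 (f y) : ℂ) * 𝐞 (a * y ^ m / q)‖ ≤
      q * ‖∑ y ∈ range n, (𝐞 (f y + t.val * y / q) : ℂ)‖ := fun n' hn' => by
    simp_rw [← rational]
    refine norm_sum_mul_comp_le_of_forall_stdAddChar
      (φ := fun b => ZMod.stdAddChar ((a : ZMod q) * b ^ m))
      (fun b => (AddChar.norm_apply _ _).le) _ _ (fun y : ℕ => (y : ZMod q)) fun t' => ?_
    simp_rw [linear]
    exact hmax (n', t') (mem_product.2 ⟨mem_range.2 (Nat.lt_succ_of_le hn'), mem_univ _⟩)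
  refine le_of_eq_of_le (congrArg norm (sum_congr rfl fun y _ => ?_))
    (norm_sum_mul_fourierChar_le _ (fun y => θ * (y : ℝ) ^ m) partialSums
      ((sum_abs_mul_pow_sub θ hm N).trans_le hθ))
  rw [← Circle.coe_mul, ← Circle.coe_mul, ← AddChar.map_add_eq_mul, ← AddChar.map_add_eq_mul]
  congr 2
  ring

lemma HasWeylExponent.exists_abs_coeff_sub_le {k C : ℕ} (hC : HasWeylExponent k C) {K : ℝ}
    (hK : 2 ≤ K) {P : Polynomial ℝ} (hP : P.natDegree ≤ k) {N : ℕ} (hN : 1 ≤ N)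
    (hS : N / K ≤ ‖∑ y ∈ range N, (𝐞 (P.eval (y : ℝ)) : ℂ)‖) :
    ∃ (a : ℤ) (q : ℕ), 1 ≤ q ∧ q ≤ K ^ (C + k.factorial) ∧
      |P.coeff k - a / q| * N ^ k ≤ K ^ C := by
  obtain ⟨q, hq, hqK, hqβ⟩ := hC K hK _ _ (fwdDiff_iter_polynomial hP) N hN hS
  have hfac : 1 ≤ k.factorial := k.factorial_pos
  have hq' : 1 ≤ q * k.factorial := Nat.mul_pos hq hfac
  have hqR : (0 : ℝ) < (q * k.factorial : ℕ) := mod_cast hq'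
  set c := P.coeff k
  refine ⟨round ((q * k.factorial : ℕ) * c), q * k.factorial, hq', ?_, ?_⟩
  · push_cast
    rw [pow_add]
    gcongr
    calc (k.factorial : ℝ) ≤ 2 ^ k.factorial := mod_cast Nat.lt_two_pow_self.le
      _ ≤ K ^ k.factorial := by gcongr
  · rw [norm_nsmul_coe_unitAddCircle, le_div_iff₀ (by positivity), UnitAddCircle.norm_eq,
      show (q : ℝ) * (c * k.factorial) = (q * k.factorial : ℕ) * c by push_cast; ring] at hqβ
    refine (mul_le_mul_of_nonneg_right ?_ (by positivity)).trans hqβ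
    set m := q * k.factorial
    calc |c - round (m * c) / m| = |m * c - round (m * c)| / m := by
          rw [← abs_of_pos hqR, ← abs_div, abs_of_pos hqR]
          congr 1
          field_simp
      _ ≤ |m * c - round (m * c)| := div_le_self (abs_nonneg _) (mod_cast hq')

/-- The linear coefficient of a polynomial phase of degree at most `k` is controlled with
exponent `C`: an exponential sum of size at least `N / K` forces `P.coeff 1` to be within
`K ^ C / N` of a rational of denominator at most `K ^ C`, up to that denominator. -/
def HasLinearCoeffExponent (k C : ℕ) : Prop :=
  ∀ K : ℝ, 2 ≤ K → ∀ P : Polynomial ℝ, P.natDegree ≤ k → ∀ N : ℕ, 1 ≤ N →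
    N / K ≤ ‖∑ y ∈ range N, (𝐞 (P.eval (y : ℝ)) : ℂ)‖ →
      ∃ q : ℕ, 1 ≤ q ∧ q ≤ K ^ C ∧ ‖q • (P.coeff 1 : UnitAddCircle)‖ ≤ K ^ C / N

lemma HasWeylExponent.exists_le_norm_sum_erase {k C : ℕ} (hC : HasWeylExponent k C) (hk : k ≠ 0)
    {K : ℝ} (hK : 2 ≤ K) {P : Polynomial ℝ} (hP : P.natDegree ≤ k) {N : ℕ} (hN : 1 ≤ N)
    (hS : N / K ≤ ‖∑ y ∈ range N, (𝐞 (P.eval (y : ℝ)) : ℂ)‖) :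
    ∃ q t n : ℕ, 1 ≤ q ∧ q ≤ K ^ (C + k.factorial) ∧ n ≤ N ∧
      N / K ^ (4 + 2 * C + k.factorial) ≤ ‖∑ y ∈ range n,
        (𝐞 ((P.erase k + Polynomial.C ((t : ℝ) / q) * Polynomial.X).eval (y : ℝ)) : ℂ)‖ := by
  have hK1 : 1 ≤ K := by linarith
  obtain ⟨a, q, hq, hqK, haq⟩ := hC.exists_abs_coeff_sub_le hK hP hN hS
  have : NeZero q := ⟨by omega⟩
  obtain ⟨n, hn, t, hnt⟩ := exists_le_norm_sum_fourierChar_add_div (q := q)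
    (fun y => (P.erase k).eval (y : ℝ)) a hk haq
  refine ⟨q, t, n, hq, hqK, hn, ?_⟩
  have decompose : ∀ x : ℝ, P.eval x =
      (P.erase k).eval x + (a / q + (P.coeff k - a / q)) * x ^ k := fun x => by
    conv_lhs => rw [← P.monomial_add_erase k]
    rw [Polynomial.eval_add, Polynomial.eval_monomial]
    ring
  simp_rw [decompose] at hS
  have twist : ∀ y : ℕ, (P.erase k + Polynomial.C ((t : ℝ) / q) * Polynomial.X).eval (y : ℝ) =
      (P.erase k).eval (y : ℝ) + t * y / q := fun y => by
    rw [Polynomial.eval_add, Polynomial.eval_C_mul, Polynomial.eval_X]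
    ring
  simp_rw [twist]
  set M := ‖∑ y ∈ range n, (𝐞 ((P.erase k).eval (y : ℝ) + t * y / q) : ℂ)‖
  have hconst : 1 + 2 * π * K ^ C ≤ K ^ 3 * K ^ C :=
    calc 1 + 2 * π * K ^ C ≤ 2 ^ 3 * K ^ C := by
          nlinarith [Real.pi_lt_d2, one_le_pow₀ hK1 (n := C)]
      _ ≤ K ^ 3 * K ^ C := by gcongr
  rw [div_le_iff₀ (by positivity)]
  calc (N : ℝ) = N / K * K := by field_simp
    _ ≤ q * M * (1 + 2 * π * K ^ C) * K := by gcongr; exact hS.trans hnt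
    _ ≤ K ^ (C + k.factorial) * M * (K ^ 3 * K ^ C) * K := by gcongr
    _ = M * K ^ (4 + 2 * C + k.factorial) := by ring

lemma natDegree_erase_le_of_natDegree_le_succ {R : Type*} [Semiring R] {P : Polynomial R} {k : ℕ}
    (hP : P.natDegree ≤ k + 1) : (P.erase (k + 1)).natDegree ≤ k := by
  rw [Polynomial.natDegree_le_iff_coeff_eq_zero]
  intro j hj
  rw [Polynomial.coeff_erase]
  split_ifs with h
  · rfl
  · exact P.coeff_eq_zero_of_natDegree_lt (by omega)

lemma HasLinearCoeffExponent.succ {k C C' : ℕ} (hC : HasLinearCoeffExponent (k + 1) C)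
    (hC' : HasWeylExponent (k + 2) C') :
    HasLinearCoeffExponent (k + 2)
      ((4 + 2 * C' + (k + 2).factorial) * (C + 1) + (C' + (k + 2).factorial)) := by
  intro K hK P hP N hN hS
  obtain ⟨q, t, n, hq, hqK, hn, hnt⟩ := hC'.exists_le_norm_sum_erase (by omega) hK hP hN hS
  set E := C' + (k + 2).factorial
  set D := 4 + 2 * C' + (k + 2).factorial
  have hK1 : 1 ≤ K := by linarith
  have hq0 : (q : ℝ) ≠ 0 := by positivity
  set Q := P.erase (k + 2) + Polynomial.C ((t : ℝ) / q) * Polynomial.X with hQ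
  have hQdeg : Q.natDegree ≤ k + 1 :=
    Polynomial.natDegree_add_le_of_degree_le (natDegree_erase_le_of_natDegree_le_succ hP)
      (((Polynomial.natDegree_C_mul_le _ _).trans Polynomial.natDegree_X_le).trans (by omega))
  have hQcoeff : Q.coeff 1 = P.coeff 1 + t / q := by simp [hQ]
  have hnN : N / K ^ D ≤ n :=
    hnt.trans ((norm_sum_fourierChar_le _ _).trans_eq (by rw [card_range]))
  have hn0 : (0 : ℝ) < n := lt_of_lt_of_le (by positivity) hnN
  obtain ⟨r, hr, hrK, hrQ⟩ := hC (K ^ D) (hK.trans (le_self_pow₀ hK1 (by omega))) Q hQdeg n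
    (mod_cast hn0) (le_trans (by gcongr) hnt)
  refine ⟨r * q, Nat.mul_pos hr hq, ?_, ?_⟩
  · push_cast
    calc (r : ℝ) * q ≤ (K ^ D) ^ C * K ^ E := by gcongr
      _ ≤ (K ^ D) ^ (C + 1) * K ^ E := by
        gcongr
        exacts [one_le_pow₀ hK1, by omega]
      _ = K ^ (D * (C + 1) + E) := by ring
  · have cancel : q • (Q.coeff 1 : UnitAddCircle) = q • (P.coeff 1 : UnitAddCircle) := by
      have shift : q * (P.coeff 1 + t / q) = q * P.coeff 1 - ((-t : ℤ) : ℝ) := by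
        push_cast
        field_simp
        ring
      rw [hQcoeff, ← AddCircle.coe_nsmul, ← AddCircle.coe_nsmul, nsmul_eq_mul, nsmul_eq_mul, shift,
        coe_sub_intCast_unitAddCircle]
    rw [mul_comm, mul_nsmul', smul_comm, ← cancel, smul_comm]
    calc ‖q • r • (Q.coeff 1 : UnitAddCircle)‖ ≤ q * ‖r • (Q.coeff 1 : UnitAddCircle)‖ :=
          norm_nsmul_le
      _ ≤ K ^ E * ((K ^ D) ^ C / (N / K ^ D)) := by
          gcongr
          exact hrQ.trans (by gcongr)
      _ = K ^ (D * (C + 1) + E) / N := by field_simp; ring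

theorem exists_hasLinearCoeffExponent (k : ℕ) : ∃ C, HasLinearCoeffExponent (k + 1) C := by
  induction k with
  | zero =>
    obtain ⟨C, hC⟩ := exists_hasWeylExponent 0
    refine ⟨C, fun K hK P hP N hN hS => ?_⟩
    simpa using hC K hK _ _ (fwdDiff_iter_polynomial hP) N hN hS
  | succ k ih =>
    obtain ⟨C, hC⟩ := ih
    obtain ⟨C', hC'⟩ := exists_hasWeylExponent (k + 1)
    exact ⟨_, hC.succ hC'⟩

end LinearCoefficient

section FejerKernel

/-- The Fejér kernel of order `H`, normalised to have value `H ^ 2` at `0`. -/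
noncomputable def fejerKernel (H : ℕ) (x : ℝ) : ℝ := ‖∑ j ∈ range H, (𝐞 (j * x) : ℂ)‖ ^ 2

lemma fejerKernel_nonneg (H : ℕ) (x : ℝ) : 0 ≤ fejerKernel H x := sq_nonneg _

lemma fejerKernel_eq (H : ℕ) (x : ℝ) :
    fejerKernel H x = H + 2 * (∑ h ∈ Ico 1 H, ((H - h : ℕ) : ℂ) * 𝐞 (h * x)).re := by
  rw [fejerKernel, norm_sum_fourierChar_sq_eq (fun j => j * x)]
  congr 3
  refine sum_congr rfl fun h _ => ?_
  have shift : ∀ y : ℕ, (Δ_[h] (fun j : ℕ => j * x)) y = h * x := fun y => by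
    simp only [fwdDiff]
    push_cast
    ring
  simp_rw [shift]
  rw [sum_const, card_range, nsmul_eq_mul]

lemma fejerKernel_le_of_le_norm (H : ℕ) {x η : ℝ} (hη : 0 < η)
    (hx : η ≤ ‖(x : UnitAddCircle)‖) : fejerKernel H x ≤ 1 / (4 * η ^ 2) := by
  have geom := norm_mul_norm_geom_sum_fourierChar_le x 0 H
  simp only [zero_add] at geom
  rw [fejerKernel, le_div_iff₀ (by positivity)]
  set s := ‖∑ j ∈ range H, (𝐞 (j * x) : ℂ)‖
  calc s ^ 2 * (4 * η ^ 2) = (2 * η * s) ^ 2 := by ring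
    _ ≤ 1 ^ 2 := by
        gcongr
        exact le_trans (by gcongr) geom
    _ = 1 := one_pow 2

lemma sum_fourierChar_mul_sub_div_eq_zero {h H : ℕ} (h₀ : 0 < h) (hH : h < H) (x : ℝ) :
    ∑ m ∈ range H, (𝐞 (h * (x - m / H)) : ℂ) = 0 := by
  have hH0 : (0 : ℝ) < H := by exact_mod_cast h₀.trans hH
  set w : ℂ := (𝐞 (-(h / H : ℝ)) : ℂ) with hw
  have factor : ∑ m ∈ range H, (𝐞 (h * (x - m / H)) : ℂ) = 𝐞 (h * x) * ∑ m ∈ range H, w ^ m := by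
    rw [mul_sum]
    refine sum_congr rfl fun m _ => ?_
    rw [hw, ← Circle.coe_pow, ← fourierChar_natCast_mul, ← Circle.coe_mul,
      ← AddChar.map_add_eq_mul]
    congr 2
    ring
  have root : w ^ H = 1 := by
    rw [hw, ← Circle.coe_pow, ← fourierChar_natCast_mul,
      show (H : ℝ) * -(h / H) = ((-h : ℤ) : ℝ) by push_cast; field_simp, fourierChar_intCast,
      Circle.coe_one]
  have nontrivial : w - 1 ≠ 0 := by
    have angle : π * (h / H) < π :=
      mul_lt_of_lt_one_right pi_pos ((div_lt_one hH0).2 (mod_cast hH))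
    have := sin_pos_of_pos_of_lt_pi (by positivity) angle
    rw [← norm_pos_iff, hw, norm_fourierChar_sub_one, mul_neg, sin_neg, abs_neg]
    positivity
  rw [factor, geom_sum_eq (sub_ne_zero.1 nontrivial), root, sub_self, zero_div, mul_zero]

lemma sum_fejerKernel_sub_div (H : ℕ) (x : ℝ) :
    ∑ m ∈ range H, fejerKernel H (x - m / H) = (H : ℝ) ^ 2 := by
  have cancel : ∑ h ∈ Ico 1 H, ∑ m ∈ range H, ((H - h : ℕ) : ℂ) * 𝐞 (h * (x - m / H)) = 0 :=
    sum_eq_zero fun h hh => by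
      rw [mem_Ico] at hh
      rw [← mul_sum, sum_fourierChar_mul_sub_div_eq_zero hh.1 hh.2, mul_zero]
  simp_rw [fejerKernel_eq, sum_add_distrib, ← mul_sum, ← Complex.re_sum]
  rw [sum_comm, cancel, Complex.zero_re, mul_zero, add_zero, sum_const, card_range, nsmul_eq_mul,
    sq]

end FejerKernel

section Discrepancy

variable {f : ℕ → ℝ} {N : ℕ}

lemma sum_fejerKernel_sub_le {H : ℕ}
    (hf : ∀ h ∈ Ico 1 H, ‖∑ y ∈ range N, (𝐞 (h * f y) : ℂ)‖ ≤ N / (H : ℝ) ^ 2) (c : ℝ) :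
    ∑ y ∈ range N, fejerKernel H (f y - c) ≤ N * (H + 2) := by
  have term : ∀ h ∈ Ico 1 H, ‖∑ y ∈ range N, ((H - h : ℕ) : ℂ) * 𝐞 (h * (f y - c))‖ ≤ N / H := by
    intro h hh
    have hH0 : (0 : ℝ) < H := Nat.cast_pos.2 (by rw [mem_Ico] at hh; omega)
    have twist : ∀ y, ((H - h : ℕ) : ℂ) * 𝐞 (h * (f y - c)) =
        (((H - h : ℕ) : ℂ) * 𝐞 (-(h * c))) * 𝐞 (h * f y) := fun y => by
      rw [mul_assoc, ← Circle.coe_mul, ← AddChar.map_add_eq_mul]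
      congr 3
      ring
    simp_rw [twist]
    rw [← mul_sum, norm_mul, norm_mul, Circle.norm_coe, mul_one, Complex.norm_natCast]
    calc ((H - h : ℕ) : ℝ) * ‖∑ y ∈ range N, (𝐞 (h * f y) : ℂ)‖ ≤ H * (N / (H : ℝ) ^ 2) := by
          gcongr
          exacts [Nat.sub_le H h, hf h hh]
      _ = N / H := by field_simp
  have total : ‖∑ h ∈ Ico 1 H, ∑ y ∈ range N, ((H - h : ℕ) : ℂ) * 𝐞 (h * (f y - c))‖ ≤ N := by
    refine (norm_sum_le_of_le _ term).trans ?_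
    rw [sum_const, nsmul_eq_mul, Nat.card_Ico]
    calc ((H - 1 : ℕ) : ℝ) * (N / H) ≤ H * (N / H) := by
          gcongr
          exact Nat.sub_le H 1
      _ ≤ N := by
          rcases Nat.eq_zero_or_pos H with rfl | hH
          · simp
          · rw [mul_div_cancel₀ _ (by positivity)]
  have real_part := (Complex.re_le_norm _).trans total
  simp_rw [fejerKernel_eq, sum_add_distrib, ← mul_sum, ← Complex.re_sum]
  rw [sum_comm, sum_const, card_range, nsmul_eq_mul]
  linarith

lemma card_mul_le_of_le_norm_sub_div {H : ℕ}
    (hf : ∀ h ∈ Ico 1 H, ‖∑ y ∈ range N, (𝐞 (h * f y) : ℂ)‖ ≤ N / (H : ℝ) ^ 2)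
    {Y A : Finset ℕ} (hY : Y ⊆ range N) (hA : A ⊆ range H) {η : ℝ} (hη : 0 < η)
    (hYA : ∀ y ∈ Y, ∀ m ∈ range H \ A, η ≤ ‖((f y - m / H : ℝ) : UnitAddCircle)‖) :
    #Y * ((H : ℝ) ^ 2 - H / (4 * η ^ 2)) ≤ #A * (N * (H + 2)) := by
  have upper : ∑ m ∈ A, ∑ y ∈ Y, fejerKernel H (f y - m / H) ≤ #A * (N * (H + 2)) := by
    rw [← nsmul_eq_mul]
    refine sum_le_card_nsmul _ _ _ fun m _ => le_trans ?_ (sum_fejerKernel_sub_le hf (m / H))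
    exact sum_le_sum_of_subset_of_nonneg hY fun _ _ _ => fejerKernel_nonneg _ _
  refine le_trans ?_ upper
  rw [sum_comm, ← nsmul_eq_mul]
  refine card_nsmul_le_sum _ _ _ fun y hy => ?_
  have tail : ∑ m ∈ range H \ A, fejerKernel H (f y - m / H) ≤ H / (4 * η ^ 2) := by
    refine (sum_le_card_nsmul _ _ (1 / (4 * η ^ 2)) fun m hm =>
      fejerKernel_le_of_le_norm _ hη (hYA y hy m hm)).trans ?_
    rw [nsmul_eq_mul, mul_one_div]
    gcongr
    exact (card_le_card sdiff_subset).trans_eq (card_range H)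
  have total := sum_fejerKernel_sub_div H (f y)
  rw [← sum_sdiff hA] at total
  linarith

lemma card_filter_range_lt_le {b : ℝ} (hb : 0 ≤ b) (H : ℕ) :
    (#((range H).filter fun m : ℕ => (m : ℝ) < b) : ℝ) ≤ b + 1 := by
  have : ((range H).filter fun m : ℕ => (m : ℝ) < b) ⊆ range ⌈b⌉₊ := fun m hm =>
    mem_range.2 (Nat.lt_ceil.2 (mem_filter.1 hm).2)
  calc (#((range H).filter fun m : ℕ => (m : ℝ) < b) : ℝ) ≤ ⌈b⌉₊ :=
        mod_cast (card_le_card this).trans_eq (card_range _)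
    _ ≤ b + 1 := (Nat.ceil_lt_add_one hb).le

lemma card_filter_range_gt_le {a : ℝ} {H : ℕ} (ha : a ≤ H) :
    (#((range H).filter fun m : ℕ => a < (m : ℝ)) : ℝ) ≤ H - a + 1 := by
  refine le_trans ?_ (card_filter_range_lt_le (sub_nonneg.2 ha) H)
  refine mod_cast card_le_card_of_injOn (fun m => H - 1 - m) (fun m hm => ?_)
    fun x hx y hy hxy => ?_
  · simp only [coe_filter, mem_range, Set.mem_ofPred_eq] at hm ⊢
    refine ⟨by omega, ?_⟩
    rw [Nat.sub_sub, Nat.cast_sub (by omega)]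
    push_cast
    linarith
  · simp only [coe_filter, mem_range, Set.mem_ofPred_eq] at hx hy hxy
    omega

lemma card_filter_range_lt_or_gt_le {a b : ℝ} {H : ℕ} (ha : a ≤ H) (hb : 0 ≤ b) :
    (#((range H).filter fun m : ℕ => (m : ℝ) < b ∨ a < (m : ℝ)) : ℝ) ≤ b + H - a + 2 := by
  have union : (#((range H).filter fun m : ℕ => (m : ℝ) < b ∨ a < (m : ℝ)) : ℝ) ≤
      #((range H).filter fun m : ℕ => (m : ℝ) < b) +
        #((range H).filter fun m : ℕ => a < (m : ℝ)) := by
    rw [filter_or]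
    exact mod_cast card_union_le _ _
  linarith [card_filter_range_lt_le hb H, card_filter_range_gt_le ha]

lemma card_mul_le_of_forall_le_norm_sub {H : ℕ} (hH : 0 < H)
    (hf : ∀ h ∈ Ico 1 H, ‖∑ y ∈ range N, (𝐞 (h * f y) : ℂ)‖ ≤ N / (H : ℝ) ^ 2)
    {Y : Finset ℕ} (hY : Y ⊆ range N) {a b η : ℝ} (ha : a ≤ 1) (hb : 0 ≤ b) (hη : 0 < η)
    (hYab : ∀ y ∈ Y, ∀ t ∈ Set.Icc b a, η ≤ ‖((f y - t : ℝ) : UnitAddCircle)‖) :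
    #Y * ((H : ℝ) ^ 2 - H / (4 * η ^ 2)) ≤ ((b + 1 - a) * H + 2) * (N * (H + 2)) := by
  have hH0 : (0 : ℝ) < H := Nat.cast_pos.2 hH
  set A := (range H).filter fun m : ℕ => (m : ℝ) < b * H ∨ a * H < (m : ℝ)
  have hA : (#A : ℝ) ≤ b * H + H - a * H + 2 :=
    card_filter_range_lt_or_gt_le (mul_le_of_le_one_left hH0.le ha) (mul_nonneg hb hH0.le)
  calc #Y * ((H : ℝ) ^ 2 - H / (4 * η ^ 2)) ≤ #A * (N * (H + 2)) :=
        card_mul_le_of_le_norm_sub_div hf hY (filter_subset _ _ : A ⊆ range H) hη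
          fun y hy m hm => by
            rw [mem_sdiff, mem_filter, not_and_or, not_or, not_lt, not_lt] at hm
            obtain ⟨hbm, hma⟩ := hm.2.resolve_left (not_not.2 hm.1)
            exact hYab y hy _ ⟨(le_div_iff₀ hH0).2 hbm, (div_le_iff₀ hH0).2 hma⟩
    _ ≤ ((b + 1 - a) * H + 2) * (N * (H + 2)) := by
        gcongr
        linarith

lemma card_le_of_forall_le_norm_sub {G : ℕ} (hG : 2 ≤ G)
    (hf : ∀ h ∈ Ico 1 (G ^ 3), ‖∑ y ∈ range N, (𝐞 (h * f y) : ℂ)‖ ≤ N / ((G ^ 3 : ℕ) : ℝ) ^ 2)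
    {Y : Finset ℕ} (hY : Y ⊆ range N) {a b : ℝ} (ha : a ≤ 1) (hb : 0 ≤ b) (hab : b ≤ a + 1)
    (hYab : ∀ y ∈ Y, ∀ t ∈ Set.Icc b a, 1 / (G : ℝ) ≤ ‖((f y - t : ℝ) : UnitAddCircle)‖) :
    (#Y : ℝ) ≤ N * (b + 1 - a + 8 / G) := by
  have hg : (2 : ℝ) ≤ G := mod_cast hG
  have hg0 : (0 : ℝ) < G := by linarith
  have count := card_mul_le_of_forall_le_norm_sub (Nat.pow_pos (by omega)) hf hY ha hb
    (one_div_pos.2 hg0) hYab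
  have hYN : (#Y : ℝ) ≤ N := mod_cast (card_le_card hY).trans_eq (card_range N)
  rw [Nat.cast_pow] at count
  set g := (G : ℝ)
  have hl : b + 1 - a ≤ 2 := by linarith
  set l := b + 1 - a
  have polynomial : g ^ 5 / 4 + (l * g ^ 3 + 2) * (g ^ 3 + 2) ≤ l * g ^ 6 + 8 * g ^ 5 := by
    have h2 : 4 ≤ g ^ 2 := by nlinarith
    have h3 : 8 ≤ g ^ 3 := by nlinarith
    nlinarith [mul_le_mul_of_nonneg_right hl (pow_pos hg0 3).le]
  refine le_of_mul_le_mul_right (a := g ^ 6) ?_ (by positivity)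
  calc #Y * g ^ 6
      = #Y * (g ^ 5 / 4) + #Y * ((g ^ 3) ^ 2 - g ^ 3 / (4 * (1 / g) ^ 2)) := by field_simp; ring
    _ ≤ N * (g ^ 5 / 4) + (l * g ^ 3 + 2) * (N * (g ^ 3 + 2)) :=
        add_le_add (by gcongr) count
    _ = N * (g ^ 5 / 4 + (l * g ^ 3 + 2) * (g ^ 3 + 2)) := by ring
    _ ≤ N * (l * g ^ 6 + 8 * g ^ 5) := by gcongr
    _ = N * (l + 8 / g) * g ^ 6 := by field_simp

lemma le_norm_sub_of_le_abs_fract_sub {x t η : ℝ} (h₁ : η ≤ |Int.fract x - t|)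
    (h₂ : |Int.fract x - t| ≤ 1 - η) : η ≤ ‖((x - t : ℝ) : UnitAddCircle)‖ := by
  rw [← coe_sub_intCast_unitAddCircle _ ⌊x⌋, sub_right_comm]
  exact le_norm_coe_unitAddCircle h₁ h₂

theorem abs_card_filter_fract_lt_sub_le {G : ℕ} (hG : 2 ≤ G)
    (hf : ∀ h ∈ Ico 1 (G ^ 3), ‖∑ y ∈ range N, (𝐞 (h * f y) : ℂ)‖ ≤ N / ((G ^ 3 : ℕ) : ℝ) ^ 2)
    {δ : ℝ} (hδ₀ : 0 ≤ δ) (hδ₁ : δ ≤ 1) :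
    |(#{y ∈ range N | Int.fract (f y) < δ} : ℝ) - δ * N| ≤ 10 * N / G := by
  have hg : (2 : ℝ) ≤ G := mod_cast hG
  have hg1 : 1 / (G : ℝ) ≤ 1 / 2 := one_div_le_one_div_of_le two_pos hg
  have hg0 : 0 < 1 / (G : ℝ) := by positivity
  have inside := card_le_of_forall_le_norm_sub hG hf
    (filter_subset (fun y => Int.fract (f y) < δ) _) (a := 1 - 1 / G) (b := δ + 1 / G)
    (by linarith) (by linarith) (by linarith) fun y hy t ht => by
      have hy₀ := Int.fract_nonneg (f y)
      have hyδ := (mem_filter.1 hy).2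
      have : |Int.fract (f y) - t| = t - Int.fract (f y) := by
        rw [abs_sub_comm, abs_of_nonneg]
        linarith [ht.1]
      apply le_norm_sub_of_le_abs_fract_sub <;> linarith [ht.1, ht.2]
  have outside := card_le_of_forall_le_norm_sub hG hf
    (filter_subset (fun y => ¬ Int.fract (f y) < δ) _) (a := δ - 1 / G) (b := 1 / G)
    (by linarith) (by linarith) (by linarith) fun y hy t ht => by
      have hy₁ := Int.fract_lt_one (f y)
      have hyδ := not_lt.1 (mem_filter.1 hy).2
      have : |Int.fract (f y) - t| = Int.fract (f y) - t := by
        rw [abs_of_nonneg]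
        linarith [ht.2]
      apply le_norm_sub_of_le_abs_fract_sub <;> linarith [ht.1, ht.2]
  have partition : (#{y ∈ range N | Int.fract (f y) < δ} : ℝ) +
      #{y ∈ range N | ¬ Int.fract (f y) < δ} = N := by
    rw [← Nat.cast_add, card_filter_add_card_filter_not, card_range]
  have inside' : (N : ℝ) * (δ + 1 / G + 1 - (1 - 1 / G) + 8 / G) = δ * N + 10 * N / G := by ring
  rw [abs_le]
  constructor <;> linarith

end Discrepancy

section NonLiouville

lemma exists_one_le_norm_nsmul_mul_pow {α : ℝ} (hα : ¬ IsLiouvilleReal α) :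
    ∃ n : ℕ, ∀ q : ℕ, 1 ≤ q → 1 ≤ ‖q • (α : UnitAddCircle)‖ * (2 * q : ℝ) ^ n := by
  unfold IsLiouvilleReal at hα
  push Not at hα
  obtain ⟨n, hn⟩ := hα
  refine ⟨n, fun q hq => ?_⟩
  have hq1 : (1 : ℝ) ≤ q := mod_cast hq
  rw [norm_nsmul_coe_unitAddCircle, UnitAddCircle.norm_eq]
  -- Doubling numerator and denominator meets the requirement `1 < q` of `IsLiouvilleReal`.
  have apart := hn (2 * round ((q : ℝ) * α)) (2 * q) (by omega)
  push_cast at apart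
  rw [show α - 2 * (round ((q : ℝ) * α) : ℝ) / (2 * q) = (q * α - round ((q : ℝ) * α)) / q by
      field_simp, abs_div, zpow_neg, zpow_natCast, abs_of_pos (by linarith : (0 : ℝ) < q),
    lt_div_iff₀ (by linarith), inv_mul_lt_iff₀ (by positivity)] at apart
  linarith

theorem exists_norm_sum_fourierChar_mul_eval_le {α : ℝ} (hα : ¬ IsLiouvilleReal α) (k : ℕ) :
    ∃ B > 0, ∀ G : ℕ, 2 ≤ G → ∀ N : ℕ, G ^ B ≤ N → ∀ P : Polynomial ℝ, P.natDegree ≤ k →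
      P.coeff 1 = α → ∀ h ∈ Ico 1 (G ^ 3),
        ‖∑ y ∈ range N, (𝐞 (h * P.eval (y : ℝ)) : ℂ)‖ ≤ N / ((G ^ 3 : ℕ) : ℝ) ^ 2 := by
  obtain ⟨n, hn⟩ := exists_one_le_norm_nsmul_mul_pow hα
  obtain ⟨C, hC⟩ := exists_hasLinearCoeffExponent k
  refine ⟨6 * C + (6 * C + 4) * n + 1, Nat.succ_pos _, fun G hG N hN P hP hPα h hh => ?_⟩
  obtain ⟨hh₁, hhG⟩ := mem_Ico.1 hh
  have hg : (2 : ℝ) ≤ G := mod_cast hG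
  have hN1 : 1 ≤ N := le_trans (Nat.pow_pos (by omega)) hN
  have hK : ((G ^ 3 : ℕ) : ℝ) ^ 2 = (G : ℝ) ^ 6 := by
    push_cast
    ring
  rw [hK]
  by_contra! large
  have heval : ∀ y : ℕ, (h : ℝ) * P.eval (y : ℝ) = (Polynomial.C (h : ℝ) * P).eval (y : ℝ) :=
    fun y => Polynomial.eval_C_mul.symm
  simp_rw [heval] at large
  obtain ⟨q, hq, hqG, hqα⟩ := hC _ (hg.trans (le_self_pow₀ (by linarith) (by norm_num)))
    (Polynomial.C (h : ℝ) * P) ((Polynomial.natDegree_C_mul_le _ _).trans (by omega)) N hN1 large.le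
  rw [Polynomial.coeff_C_mul, hPα, ← nsmul_eq_mul, AddCircle.coe_nsmul, ← mul_nsmul',
    ← pow_mul] at hqα
  rw [← pow_mul] at hqG
  have hqh : (2 * (q * h : ℕ) : ℝ) ≤ (G : ℝ) ^ (6 * C + 4) := by
    push_cast
    calc (2 * (q * h) : ℝ) ≤ G * (G ^ (6 * C) * G ^ 3) := by gcongr; exact_mod_cast hhG.le
      _ = (G : ℝ) ^ (6 * C + 4) := by ring
  have contradictory : (N : ℝ) < N :=
    calc (N : ℝ) = N * 1 := (mul_one _).symm
      _ ≤ N * (‖(q * h) • (α : UnitAddCircle)‖ * (2 * (q * h : ℕ) : ℝ) ^ n) := by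
          gcongr
          exact hn (q * h) (Nat.mul_pos hq hh₁)
      _ ≤ N * ((G : ℝ) ^ (6 * C) / N * ((G : ℝ) ^ (6 * C + 4)) ^ n) := by gcongr
      _ = (G : ℝ) ^ (6 * C + (6 * C + 4) * n) := by field_simp; ring
      _ < (G : ℝ) ^ (6 * C + (6 * C + 4) * n + 1) :=
          pow_lt_pow_right₀ (by linarith) (Nat.lt_succ_self _)
      _ ≤ N := mod_cast hN
  exact lt_irrefl _ contradictory

end NonLiouville

section DivisorCounts

lemma natCast_dvd_floor_iff (u : ℝ) {d : ℕ} (hd : 0 < d) :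
    (d : ℤ) ∣ ⌊u⌋ ↔ Int.fract (u / d) < 1 / d := by
  have hd0 : (0 : ℝ) < d := Nat.cast_pos.2 hd
  rw [Int.fract, Int.floor_div_natCast, sub_lt_iff_lt_add, div_lt_iff₀ hd0, add_mul,
    one_div_mul_cancel hd0.ne']
  have floor_lt : u < 1 + ((⌊u⌋ / (d : ℤ) : ℤ) : ℝ) * d ↔ ⌊u⌋ < 1 + d * (⌊u⌋ / (d : ℤ)) := by
    rw [Int.floor_lt, mul_comm]
    push_cast
    rfl
  have division := Int.emod_add_mul_ediv ⌊u⌋ d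
  have remainder := Int.emod_nonneg ⌊u⌋ (Int.natCast_ne_zero.2 hd.ne')
  rw [floor_lt, Int.dvd_iff_emod_eq_zero]
  constructor <;> intro <;> omega

/-- The polynomial `P(dx)/d`: its fractional part at `y` decides whether `d ∣ ⌊P(dy)⌋`. -/
noncomputable def dilate (P : Polynomial ℝ) (d : ℕ) : Polynomial ℝ :=
  Polynomial.C (1 / (d : ℝ)) * P.comp (Polynomial.C (d : ℝ) * Polynomial.X)

lemma eval_dilate (P : Polynomial ℝ) (d : ℕ) (y : ℝ) :
    (dilate P d).eval y = P.eval (d * y) / d := by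
  simp only [dilate, Polynomial.eval_mul, Polynomial.eval_C, Polynomial.eval_comp,
    Polynomial.eval_X]
  ring

lemma coeff_one_dilate (P : Polynomial ℝ) {d : ℕ} (hd : 0 < d) :
    (dilate P d).coeff 1 = P.coeff 1 := by
  have hd0 : (d : ℝ) ≠ 0 := Nat.cast_ne_zero.2 hd.ne'
  rw [dilate, Polynomial.coeff_C_mul, Polynomial.comp_C_mul_X_coeff]
  field_simp

lemma natDegree_dilate_le (P : Polynomial ℝ) (d : ℕ) :
    (dilate P d).natDegree ≤ P.natDegree := by
  refine (Polynomial.natDegree_C_mul_le _ _).trans (Polynomial.natDegree_comp_le.trans ?_)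
  exact (Nat.mul_le_mul_left _ ((Polynomial.natDegree_C_mul_le _ _).trans
    Polynomial.natDegree_X_le)).trans_eq (mul_one _)

lemma card_AP (P : Polynomial ℝ) {d : ℕ} (hd : 0 < d) (X : ℝ) :
    #(AP P d X) = #((Icc 1 ⌊X / d⌋₊).filter fun y : ℕ =>
      Int.fract ((dilate P d).eval (y : ℝ)) < 1 / d) := by
  have mem_iff (y : ℕ) : d * y ∈ AP P d X ↔
      y ∈ Icc 1 ⌊X / d⌋₊ ∧ Int.fract ((dilate P d).eval (y : ℝ)) < 1 / d := by
    rw [AP, mem_filter, mem_Icc, mem_Icc, natCast_dvd_floor_iff _ hd, Nat.cast_mul, eval_dilate,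
      Nat.floor_div_natCast, Nat.le_div_iff_mul_le hd, mul_comm y, Nat.one_le_iff_ne_zero,
      Nat.one_le_iff_ne_zero, mul_ne_zero_iff]
    push_cast
    simp [hd.ne']
  symm
  refine card_bij (fun y _ => d * y) (fun y hy => (mem_iff y).2 (mem_filter.1 hy))
    (fun _ _ _ _ => Nat.eq_of_mul_eq_mul_left hd) fun x hx => ?_
  obtain ⟨y, rfl⟩ := Int.natCast_dvd_natCast.1 (mem_filter.1 hx).2.1
  exact ⟨y, mem_filter.2 ((mem_iff y).1 hx), rfl⟩

lemma abs_card_filter_Icc_one_sub_card_filter_range_le (p : ℕ → Prop) [DecidablePred p] (N : ℕ) :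
    |(#{y ∈ Icc 1 N | p y} : ℝ) - #{y ∈ range N | p y}| ≤ 1 := by
  have upper : #{y ∈ Icc 1 N | p y} ≤ #{y ∈ range N | p y} + 1 := by
    refine (card_le_card fun y hy => ?_).trans (card_insert_le N _)
    simp only [mem_filter, mem_Icc, mem_insert, mem_range] at hy ⊢
    by_cases hyN : y = N
    · exact Or.inl hyN
    · exact Or.inr ⟨by omega, hy.2⟩
  have lower : #{y ∈ range N | p y} ≤ #{y ∈ Icc 1 N | p y} + 1 := by
    refine (card_le_card fun y hy => ?_).trans (card_insert_le 0 _)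
    simp only [mem_filter, mem_Icc, mem_insert, mem_range] at hy ⊢
    by_cases hy0 : y = 0
    · exact Or.inl hy0
    · exact Or.inr ⟨by omega, hy.2⟩
  have upper' : (#{y ∈ Icc 1 N | p y} : ℝ) ≤ #{y ∈ range N | p y} + 1 := mod_cast upper
  have lower' : (#{y ∈ range N | p y} : ℝ) ≤ #{y ∈ Icc 1 N | p y} + 1 := mod_cast lower
  rw [abs_le]
  constructor <;> linarith

theorem exists_abs_card_AP_sub_le {α : ℝ} (hα : ¬ IsLiouvilleReal α) (k : ℕ) :
    ∃ B > 0, ∀ G : ℕ, 2 ≤ G → ∀ P : Polynomial ℝ, P.natDegree ≤ k → P.coeff 1 = α →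
      ∀ d : ℕ, 0 < d → ∀ X : ℝ, (d : ℝ) * (G : ℝ) ^ B ≤ X →
        |(#(AP P d X) : ℝ) - X / (d : ℝ) ^ 2| ≤ 10 * X / (d * G) + 2 := by
  obtain ⟨B, hB, hsum⟩ := exists_norm_sum_fourierChar_mul_eval_le hα k
  refine ⟨B, hB, fun G hG P hP hPα d hd X hX => ?_⟩
  have hd0 : (0 : ℝ) < d := Nat.cast_pos.2 hd
  have hd1 : 1 / (d : ℝ) ≤ 1 := (div_le_one hd0).2 (mod_cast hd)
  have hX0 : 0 ≤ X := le_trans (by positivity) hX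
  set N := ⌊X / d⌋₊
  have hGN : G ^ B ≤ N := Nat.le_floor (by rw [le_div_iff₀' hd0]; exact_mod_cast hX)
  have hNX : (N : ℝ) ≤ X / d := Nat.floor_le (by positivity)
  have equidistribution := abs_card_filter_fract_lt_sub_le hG
    (hsum G hG N hGN (dilate P d) ((natDegree_dilate_le P d).trans hP)
      ((coeff_one_dilate P hd).trans hPα)) (one_div_nonneg.2 hd0.le) hd1
  have boundary := abs_card_filter_Icc_one_sub_card_filter_range_le
    (fun y : ℕ => Int.fract ((dilate P d).eval (y : ℝ)) < 1 / d) N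
  rw [← card_AP P hd X] at boundary
  have rounding : |1 / (d : ℝ) * N - X / (d : ℝ) ^ 2| ≤ 1 := by
    have hXN : X / d - N ≤ 1 := by linarith [Nat.lt_floor_add_one (X / d)]
    have hXN₀ : 0 ≤ X / d - N := sub_nonneg.2 hNX
    rw [show 1 / (d : ℝ) * N - X / (d : ℝ) ^ 2 = -(1 / d * (X / d - N)) by field_simp; ring,
      abs_neg, abs_of_nonneg (by positivity)]
    exact mul_le_one₀ hd1 hXN₀ hXN
  have error : 10 * (N : ℝ) / G ≤ 10 * X / (d * G) := by
    calc 10 * (N : ℝ) / G ≤ 10 * (X / d) / G := by gcongr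
      _ = 10 * X / (d * G) := by field_simp
  rw [abs_le] at *
  constructor <;> linarith [equidistribution.1, equidistribution.2, boundary.1, boundary.2,
    rounding.1, rounding.2]

end DivisorCounts

section Moebius

lemma sum_divisors_moebius (n : ℕ) : ∑ d ∈ n.divisors, (μ d : ℝ) = if n = 1 then 1 else 0 := by
  have := DFunLike.congr_fun (ArithmeticFunction.coe_moebius_mul_coe_zeta (R := ℝ)) n
  rwa [ArithmeticFunction.coe_mul_zeta_apply, ArithmeticFunction.one_apply] at this

lemma card_filter_coprime_eq_sum_moebius {ι : Type*} (s : Finset ι) (g : ι → ℕ) {Q : ℕ}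
    (hQ : Q ≠ 0) :
    (#{x ∈ s | (g x).Coprime Q} : ℝ) = ∑ d ∈ Q.divisors, (μ d : ℝ) * #{x ∈ s | d ∣ g x} := by
  have indicator (x : ι) : (if (g x).Coprime Q then (1 : ℝ) else 0) =
      ∑ d ∈ Q.divisors, if d ∣ g x then (μ d : ℝ) else 0 := by
    have divisors_gcd : {d ∈ Q.divisors | d ∣ g x} = ((g x).gcd Q).divisors := by
      ext d
      simp only [mem_filter, Nat.mem_divisors, Nat.dvd_gcd_iff, ne_eq, hQ, Nat.gcd_eq_zero_iff]
      tauto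
    rw [← sum_filter, divisors_gcd, sum_divisors_moebius]
  rw [card_filter, Nat.cast_sum]
  push_cast
  simp_rw [indicator]
  rw [sum_comm]
  refine sum_congr rfl fun d _ => ?_
  rw [← sum_filter, sum_const, nsmul_eq_mul, mul_comm]

lemma tendsto_sum_moebius_div_sq :
    Filter.Tendsto (fun M => ∑ d ∈ range M, (μ d : ℝ) / (d : ℝ) ^ 2) Filter.atTop
      (nhds (1 / (π ^ 2 / 6))) := by
  have hs : 1 < (2 : ℂ).re := by norm_num
  have value : LSeries (fun n => (μ n : ℂ)) 2 = ((1 / (π ^ 2 / 6) : ℝ) : ℂ) := by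
    have inverse := ArithmeticFunction.LSeries_zeta_mul_Lseries_moebius hs
    rw [ArithmeticFunction.LSeries_zeta_eq_riemannZeta hs, riemannZeta_two] at inverse
    rw [eq_one_div_of_mul_eq_one_right inverse]
    push_cast
    rfl
  have limit := (ArithmeticFunction.LSeriesSummable_moebius_iff.2 hs).hasSum.tendsto_sum_nat
  rw [← LSeries, value] at limit
  refine Filter.tendsto_ofReal_iff.1 (limit.congr fun M => ?_)
  push_cast
  refine sum_congr rfl fun d _ => ?_
  rw [LSeries.term_def]
  split_ifs with hd
  · simp [hd]
  · norm_cast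

lemma abs_moebius_div_sq_le (d : ℕ) : |(μ d : ℝ) / (d : ℝ) ^ 2| ≤ ((d : ℝ) ^ 2)⁻¹ := by
  rw [abs_div, abs_of_nonneg (sq_nonneg (d : ℝ)), ← one_div]
  gcongr
  exact_mod_cast ArithmeticFunction.abs_moebius_le_one

lemma abs_sum_divisors_primorial_moebius_sub_le (z : ℕ) :
    |∑ d ∈ (primorial z).divisors, (μ d : ℝ) / (d : ℝ) ^ 2 - 1 / (π ^ 2 / 6)| ≤
      2 / ((z : ℝ) + 1) := by
  refine le_of_tendsto (tendsto_sum_moebius_div_sq.const_sub _).abs ?_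
  filter_upwards [Filter.eventually_gt_atTop (primorial z)] with M hM
  have hsub : (primorial z).divisors ⊆ range M := fun d hd =>
    mem_range.2 ((Nat.divisor_le hd).trans_lt hM)
  -- Every squarefree `d ≤ z` divides the primorial, so only `d > z` contribute to the tail.
  have tail (d : ℕ) (hd : d ∈ range M \ (primorial z).divisors) (hdz : d ∉ Ioo z M) :
      (μ d : ℝ) / (d : ℝ) ^ 2 = 0 := by
    rw [mem_sdiff, mem_range] at hd
    rw [mem_Ioo] at hdz
    have not_squarefree : ¬ Squarefree d := fun hsq => hd.2 (Nat.mem_divisors.2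
      ⟨hsq.dvd_primorial.trans (primorial_dvd_primorial (by omega)), primorial_ne_zero z⟩)
    rw [ArithmeticFunction.moebius_eq_zero_of_not_squarefree not_squarefree]
    simp
  rw [abs_sub_comm, ← sum_sdiff hsub, add_sub_cancel_right]
  calc |∑ d ∈ range M \ (primorial z).divisors, (μ d : ℝ) / (d : ℝ) ^ 2|
      = |∑ d ∈ range M \ (primorial z).divisors with d ∈ Ioo z M, (μ d : ℝ) / (d : ℝ) ^ 2| := by
        rw [sum_filter_of_ne fun d hd h => not_not.1 fun hdz => h (tail d hd hdz)]
    _ ≤ ∑ d ∈ range M \ (primorial z).divisors with d ∈ Ioo z M, ((d : ℝ) ^ 2)⁻¹ :=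
        (abs_sum_le_sum_abs _ _).trans (sum_le_sum fun d _ => abs_moebius_div_sq_le d)
    _ ≤ ∑ d ∈ Ioo z M, ((d : ℝ) ^ 2)⁻¹ :=
        sum_le_sum_of_subset_of_nonneg (fun d hd => (mem_filter.1 hd).2) fun _ _ _ => by positivity
    _ ≤ 2 / (z + 1) := sum_Ioo_inv_sq_le z M

end Moebius

section Primes

lemma primeCounting_floor_le {t : ℝ} (ht : 1 < t) :
    (Nat.primeCounting ⌊t⌋₊ : ℝ) ≤ 5 * t / log t := by
  have hlog : 0 < log t := Real.log_pos ht
  have hsqrt : 0 < √t := Real.sqrt_pos.2 (by linarith)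
  have hlog_sqrt : log √t = log t / 2 := Real.log_sqrt (by linarith)
  have log_four : log 4 ≤ 3 / 2 := by
    rw [show (4 : ℝ) = 2 ^ 2 by norm_num, Real.log_pow]
    push_cast
    linarith [Real.log_two_lt_d9]
  have sqrt_le : √t ≤ 2 * t / log t := by
    rw [le_div_iff₀ hlog]
    have := Real.log_le_sub_one_of_pos hsqrt
    nlinarith [Real.mul_self_sqrt (show 0 ≤ t by linarith)]
  calc (Nat.primeCounting ⌊t⌋₊ : ℝ) ≤ log 4 * t / log √t + √t := Chebyshev.pi_le_log4_mul_div ht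
    _ ≤ 3 / 2 * t / (log t / 2) + 2 * t / log t := by
        rw [hlog_sqrt]
        gcongr
    _ = 5 * t / log t := by field_simp; norm_num

lemma sum_Icc_inv_le (n : ℕ) : ∑ y ∈ Icc 1 n, (y : ℝ)⁻¹ ≤ 1 + log n := by
  have := harmonic_le_one_add_log n
  simp_rw [harmonic_eq_sum_Icc, Rat.cast_sum, Rat.cast_inv, Rat.cast_natCast] at this
  exact this

open Classical in
lemma card_filter_exists_prime_dvd_le_sum {N V : ℕ} (hV : 0 < V) :
    #{x ∈ Icc 1 N | ∃ p, p.Prime ∧ N / V < p ∧ p ∣ x} ≤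
      ∑ y ∈ Icc 1 V, Nat.primeCounting (N / y) := by
  have cover : {x ∈ Icc 1 N | ∃ p, p.Prime ∧ N / V < p ∧ p ∣ x} ⊆
      (Icc 1 V).biUnion fun y => {p ∈ range (N / y + 1) | p.Prime}.image (· * y) := by
    intro x hx
    rw [mem_filter, mem_Icc] at hx
    obtain ⟨⟨hx₁, hxN⟩, p, hp, hNp, y, rfl⟩ := hx
    have hy : 0 < y := Nat.pos_of_mul_pos_left hx₁
    have hyV : y ≤ V := by
      rw [Nat.div_lt_iff_lt_mul hV] at hNp
      exact (Nat.lt_of_mul_lt_mul_left (hxN.trans_lt hNp)).le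
    refine mem_biUnion.2 ⟨y, mem_Icc.2 ⟨hy, hyV⟩, mem_image_of_mem _ (mem_filter.2 ⟨?_, hp⟩)⟩
    rwa [mem_range, Nat.lt_succ_iff, Nat.le_div_iff_mul_le hy]
  refine (card_le_card cover).trans (card_biUnion_le.trans (sum_le_sum fun y _ => ?_))
  rw [Nat.primeCounting, Nat.primeCounting', Nat.count_eq_card_filter_range]
  exact card_image_le

open Classical in
lemma card_filter_exists_prime_dvd_le {X : ℝ} (hX : 1 < X) {V : ℕ} (hV : 0 < V)
    (hVX : (V : ℝ) ^ 2 ≤ X) :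
    (#{x ∈ Icc 1 ⌊X⌋₊ | ∃ p, p.Prime ∧ ⌊X⌋₊ / V < p ∧ p ∣ x} : ℝ) ≤
      10 * X / log X * (1 + log V) := by
  have hlog : 0 < log X := Real.log_pos hX
  have term (y : ℕ) (hy : y ∈ Icc 1 V) :
      (Nat.primeCounting (⌊X⌋₊ / y) : ℝ) ≤ 10 * X / log X * (y : ℝ)⁻¹ := by
    rw [mem_Icc] at hy
    have hy₀ : (0 : ℝ) < y := Nat.cast_pos.2 hy.1
    have sqrt_le : √X ≤ X / y := by
      have hy_sqrt : (y : ℝ) ≤ √X :=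
        (Nat.cast_le.2 hy.2).trans (Real.le_sqrt_of_sq_le hVX)
      rw [le_div_iff₀ hy₀]
      calc √X * y ≤ √X * √X := by gcongr
        _ = X := Real.mul_self_sqrt (by linarith)
    have one_lt : 1 < √X := Real.lt_sqrt_of_sq_lt (by linarith)
    have log_le : log X / 2 ≤ log (X / y) := by
      rw [← Real.log_sqrt (by linarith)]
      exact Real.log_le_log (by linarith) sqrt_le
    calc (Nat.primeCounting (⌊X⌋₊ / y) : ℝ) = Nat.primeCounting ⌊X / y⌋₊ := by
          rw [Nat.floor_div_natCast]
      _ ≤ 5 * (X / y) / log (X / y) := primeCounting_floor_le (one_lt.trans_le sqrt_le)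
      _ ≤ 5 * (X / y) / (log X / 2) := by gcongr
      _ = 10 * X / log X * (y : ℝ)⁻¹ := by field_simp; norm_num
  calc (#{x ∈ Icc 1 ⌊X⌋₊ | ∃ p, p.Prime ∧ ⌊X⌋₊ / V < p ∧ p ∣ x} : ℝ)
      ≤ ∑ y ∈ Icc 1 V, (Nat.primeCounting (⌊X⌋₊ / y) : ℝ) :=
        mod_cast card_filter_exists_prime_dvd_le_sum hV
    _ ≤ ∑ y ∈ Icc 1 V, 10 * X / log X * (y : ℝ)⁻¹ := sum_le_sum term
    _ ≤ 10 * X / log X * (1 + log V) := by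
        rw [← mul_sum]
        gcongr
        exact sum_Icc_inv_le V

end Primes

section Sieve

open Classical in
lemma card_filter_coprime_primorial_le {ι : Type*} (s : Finset ι) (g : ι → ℕ) (z Y : ℕ) :
    #{x ∈ s | (g x).Coprime (primorial z)} ≤ #{x ∈ s | g x = 1} +
      (∑ d ∈ Ioc z Y, #{x ∈ s | d ∣ g x} + #{x ∈ s | ∃ p, p.Prime ∧ Y < p ∧ p ∣ g x}) := by
  have cover : {x ∈ s | (g x).Coprime (primorial z)} ⊆ {x ∈ s | g x = 1} ∪
      ((Ioc z Y).biUnion (fun d => {x ∈ s | d ∣ g x}) ∪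
        {x ∈ s | ∃ p, p.Prime ∧ Y < p ∧ p ∣ g x}) := by
    intro x hx
    obtain ⟨hxs, hcop⟩ := mem_filter.1 hx
    by_cases hgx : g x = 1
    · exact mem_union_left _ (mem_filter.2 ⟨hxs, hgx⟩)
    refine mem_union_right _ ?_
    obtain ⟨p, hp, hpg⟩ := Nat.exists_prime_and_dvd hgx
    have hzp : z < p := by
      rw [← not_le, ← hp.dvd_primorial_iff]
      exact fun hpz => hp.ne_one (Nat.eq_one_of_dvd_coprimes hcop hpg hpz)
    obtain hpY | hYp := le_or_gt p Y
    · exact mem_union_left _ (mem_biUnion.2 ⟨p, mem_Ioc.2 ⟨hzp, hpY⟩, mem_filter.2 ⟨hxs, hpg⟩⟩)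
    · exact mem_union_right _ (mem_filter.2 ⟨hxs, p, hp, hYp, hpg⟩)
  refine (card_le_card cover).trans ((card_union_le _ _).trans ?_)
  gcongr
  refine (card_union_le _ _).trans ?_
  gcongr
  exact card_biUnion_le

lemma abs_sum_moebius_mul_sub_le {X E : ℝ} (hX : 0 ≤ X) (z : ℕ) {a : ℕ → ℝ}
    (ha : ∀ d ∈ (primorial z).divisors, |a d - X / (d : ℝ) ^ 2| ≤ E) :
    |∑ d ∈ (primorial z).divisors, (μ d : ℝ) * a d - X / (π ^ 2 / 6)| ≤
      primorial z * E + X * (2 / (z + 1)) := by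
  have hE : 0 ≤ E := (abs_nonneg _).trans (ha 1 (Nat.one_mem_divisors.2 (primorial_ne_zero z)))
  have split : ∑ d ∈ (primorial z).divisors, (μ d : ℝ) * a d - X / (π ^ 2 / 6) =
      ∑ d ∈ (primorial z).divisors, (μ d : ℝ) * (a d - X / (d : ℝ) ^ 2) +
        X * (∑ d ∈ (primorial z).divisors, (μ d : ℝ) / (d : ℝ) ^ 2 - 1 / (π ^ 2 / 6)) := by
    rw [mul_sub, mul_sum, ← add_sub_assoc, ← sum_add_distrib, mul_one_div]
    congr 1
    exact sum_congr rfl fun d _ => by ring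
  rw [split]
  refine (abs_add_le _ _).trans (add_le_add ?_ ?_)
  · calc |∑ d ∈ (primorial z).divisors, (μ d : ℝ) * (a d - X / (d : ℝ) ^ 2)|
        ≤ ∑ d ∈ (primorial z).divisors, |(μ d : ℝ)| * |a d - X / (d : ℝ) ^ 2| := by
          simp_rw [← abs_mul]
          exact abs_sum_le_sum_abs _ _
      _ ≤ ∑ d ∈ (primorial z).divisors, 1 * E := by
          refine sum_le_sum fun d hd => mul_le_mul ?_ (ha d hd) (abs_nonneg _) zero_le_one
          exact_mod_cast ArithmeticFunction.abs_moebius_le_one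
      _ ≤ primorial z * E := by
          rw [sum_const, nsmul_eq_mul, one_mul]
          gcongr
          exact Nat.card_divisors_le_self _
  · rw [abs_mul, abs_of_nonneg hX]
    gcongr
    exact abs_sum_divisors_primorial_moebius_sub_le z

lemma sum_Ioc_le {X c e : ℝ} (hX : 0 ≤ X) (hc : 0 ≤ c) (he : 0 ≤ e) (z Y : ℕ) {a : ℕ → ℝ}
    (ha : ∀ d ∈ Ioc z Y, a d ≤ X / (d : ℝ) ^ 2 + c / d + e) :
    ∑ d ∈ Ioc z Y, a d ≤ X * (2 / (z + 1)) + c * (1 + log Y) + Y * e := by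
  have hIoc : Ioc z Y ⊆ Icc 1 Y := fun d hd => by
    rw [mem_Ioc] at hd
    exact mem_Icc.2 ⟨by omega, hd.2⟩
  have squares : ∑ d ∈ Ioc z Y, ((d : ℝ) ^ 2)⁻¹ ≤ 2 / (z + 1) :=
    (sum_Ioo_inv_sq_le z (Y + 1)).trans' (by rw [Ioo_add_one_right_eq_Ioc])
  have harmonic : ∑ d ∈ Ioc z Y, (d : ℝ)⁻¹ ≤ 1 + log Y :=
    (sum_le_sum_of_subset_of_nonneg hIoc fun _ _ _ => by positivity).trans (sum_Icc_inv_le Y)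
  have count : (#(Ioc z Y) : ℝ) ≤ Y := mod_cast (Nat.card_Ioc z Y).trans_le (Nat.sub_le Y z)
  calc ∑ d ∈ Ioc z Y, a d ≤ ∑ d ∈ Ioc z Y, (X / (d : ℝ) ^ 2 + c / d + e) := sum_le_sum ha
    _ = X * ∑ d ∈ Ioc z Y, ((d : ℝ) ^ 2)⁻¹ + c * ∑ d ∈ Ioc z Y, (d : ℝ)⁻¹ + #(Ioc z Y) * e := by
        simp only [sum_add_distrib, mul_sum, div_eq_mul_inv, sum_const, nsmul_eq_mul]
    _ ≤ X * (2 / (z + 1)) + c * (1 + log Y) + Y * e := by gcongr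

end Sieve

section CoprimeCount

/-- The function `x ↦ gcd(x, ⌊P(x)⌋)`, whose values are sieved by small primes. -/
noncomputable def floorGcd (P : Polynomial ℝ) (x : ℕ) : ℕ := Int.gcd x ⌊P.eval (x : ℝ)⌋

lemma S_eq_card_filter (P : Polynomial ℝ) (X : ℝ) :
    S P X = #{x ∈ Icc 1 ⌊X⌋₊ | floorGcd P x = 1} := by
  classical
  -- In `S` the variable ranges over the image of `Icc 1 ⌊X⌋₊` in `ℤ`.
  unfold S
  symm
  refine card_bij (fun x _ => (x : ℤ)) (fun x hx => ?_) (fun _ _ _ _ => Int.ofNat_inj.1)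
    fun x hx => ?_
  · simp only [mem_filter, bind_def, pure_def, mem_sup, mem_singleton] at hx ⊢
    exact ⟨⟨x, hx.1, rfl⟩, hx.2⟩
  · simp only [mem_filter, bind_def, pure_def, mem_sup, mem_singleton] at hx ⊢
    obtain ⟨⟨y, hy, rfl⟩, hgcd⟩ := hx
    exact ⟨y, ⟨hy, hgcd⟩, rfl⟩

lemma AP_eq_filter (P : Polynomial ℝ) (d : ℕ) (X : ℝ) :
    AP P d X = {x ∈ Icc 1 ⌊X⌋₊ | d ∣ floorGcd P x} := by
  ext x
  rw [AP, mem_filter, mem_filter, floorGcd, ← Int.natCast_dvd_natCast, Int.dvd_coe_gcd_iff]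

lemma floorGcd_dvd (P : Polynomial ℝ) (x : ℕ) : floorGcd P x ∣ x :=
  Int.natCast_dvd_natCast.1 (Int.gcd_dvd_left _ _)

lemma abs_card_filter_coprime_floorGcd_sub_le {P : Polynomial ℝ} {X E : ℝ} (hX : 0 ≤ X) (z : ℕ)
    (hE : ∀ d ∈ (primorial z).divisors, |(#(AP P d X) : ℝ) - X / (d : ℝ) ^ 2| ≤ E) :
    |(#{x ∈ Icc 1 ⌊X⌋₊ | (floorGcd P x).Coprime (primorial z)} : ℝ) - X / (π ^ 2 / 6)| ≤
      primorial z * E + X * (2 / (z + 1)) := by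
  rw [card_filter_coprime_eq_sum_moebius _ _ (primorial_ne_zero z)]
  simp_rw [← AP_eq_filter]
  exact abs_sum_moebius_mul_sub_le hX z hE

open Classical in
lemma card_filter_coprime_floorGcd_le (P : Polynomial ℝ) (X : ℝ) (z Y : ℕ) :
    #{x ∈ Icc 1 ⌊X⌋₊ | (floorGcd P x).Coprime (primorial z)} ≤ S P X +
      (∑ d ∈ Ioc z Y, #(AP P d X) + #{x ∈ Icc 1 ⌊X⌋₊ | ∃ p, p.Prime ∧ Y < p ∧ p ∣ x}) := by
  simp_rw [S_eq_card_filter, AP_eq_filter]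
  refine (card_filter_coprime_primorial_le _ _ z Y).trans ?_
  gcongr with x _
  exact floorGcd_dvd P x

lemma S_le_card_filter_coprime_floorGcd (P : Polynomial ℝ) (X : ℝ) (Q : ℕ) :
    S P X ≤ #{x ∈ Icc 1 ⌊X⌋₊ | (floorGcd P x).Coprime Q} := by
  rw [S_eq_card_filter]
  refine card_le_card (monotone_filter_right _ fun x _ hx => ?_)
  rw [hx]
  exact Nat.coprime_one_left Q

theorem abs_S_sub_le {P : Polynomial ℝ} {X : ℝ} (hX : 1 < X) {G V z : ℕ} (hG : 0 < G) (hV : 0 < V)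
    (hVX : (V : ℝ) ^ 2 ≤ X) (hzX : (primorial z : ℝ) * V ≤ X)
    (hA : ∀ d : ℕ, 0 < d → (d : ℝ) * V ≤ X →
      |(#(AP P d X) : ℝ) - X / (d : ℝ) ^ 2| ≤ 10 * X / (d * G) + 2) :
    |(S P X : ℝ) - X / (π ^ 2 / 6)| ≤ primorial z * (10 * X / G + 2) + X * (2 / (z + 1)) +
      (X * (2 / (z + 1)) + 10 * X / G * (1 + log X) + X / V * 2 +
        10 * X / log X * (1 + log V)) := by
  have hX₀ : 0 < X := by linarith
  have hV₀ : (0 : ℝ) < V := Nat.cast_pos.2 hV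
  set Y := ⌊X⌋₊ / V with hY
  have hYX : (Y : ℝ) ≤ X / V := by
    rw [hY, ← Nat.floor_div_natCast]
    exact Nat.floor_le (by positivity)
  have density (d : ℕ) (hd : 0 < d) (hdX : (d : ℝ) * V ≤ X) :
      |(#(AP P d X) : ℝ) - X / (d : ℝ) ^ 2| ≤ 10 * X / G / d + 2 :=
    (hA d hd hdX).trans_eq (by rw [div_div, mul_comm (G : ℝ)])
  have sifted := abs_card_filter_coprime_floorGcd_sub_le (P := P) (E := 10 * X / G + 2) hX₀.le z
    fun d hd => by
      have hd₀ := Nat.pos_of_mem_divisors hd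
      have hdz : (d : ℝ) ≤ primorial z := mod_cast Nat.divisor_le hd
      have hdX : (d : ℝ) * V ≤ X := le_trans (by gcongr) hzX
      exact (density d hd₀ hdX).trans
        (add_le_add_left (div_le_self (by positivity) (mod_cast hd₀)) 2)
  have medium := sum_Ioc_le (a := fun d => (#(AP P d X) : ℝ)) (c := 10 * X / G) (e := 2) hX₀.le
    (by positivity) zero_le_two z Y fun d hd => by
      rw [mem_Ioc] at hd
      have hdY : (d : ℝ) ≤ X / V := (Nat.cast_le.2 hd.2).trans hYX
      have := (abs_le.1 (density d (by omega) ((le_div_iff₀ hV₀).1 hdY))).2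
      linarith
  have large := card_filter_exists_prime_dvd_le hX hV hVX
  have lower : (S P X : ℝ) ≤ _ :=
    Nat.cast_le.2 (S_le_card_filter_coprime_floorGcd P X (primorial z))
  have upper : (_ : ℝ) ≤ _ := Nat.cast_le.2 (card_filter_coprime_floorGcd_le P X z Y)
  push_cast at upper
  have log_le : 10 * X / G * (1 + log Y) ≤ 10 * X / G * (1 + log X) := by
    have hV₁ : (1 : ℝ) ≤ V := mod_cast hV
    have hVX₁ : (V : ℝ) ≤ X := (le_self_pow₀ hV₁ two_ne_zero).trans hVX
    have hY₀ : 0 < Y := Nat.div_pos (Nat.le_floor hVX₁) hV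
    have : log Y ≤ log X := log_le_log (mod_cast hY₀) (hYX.trans (div_le_self hX₀.le hV₁))
    gcongr
  have large_nonneg : 0 ≤ 10 * X / log X * (1 + log V) := by
    have := log_pos hX
    have := log_natCast_nonneg V
    positivity
  rw [abs_le] at sifted ⊢
  constructor <;> linarith [sifted.1, sifted.2]

end CoprimeCount

section Parameters

lemma primorial_floor_log_le {u : ℝ} (hu : 1 ≤ u) : (primorial ⌊log u⌋₊ : ℝ) ≤ u ^ 2 := by
  have four_le_exp_two : (4 : ℝ) ≤ exp 2 := by
    rw [show (2 : ℝ) = 1 + 1 by norm_num, exp_add]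
    nlinarith [exp_one_gt_d9]
  calc (primorial ⌊log u⌋₊ : ℝ) ≤ 4 ^ ⌊log u⌋₊ := mod_cast primorial_le_four_pow ⌊log u⌋₊
    _ ≤ exp 2 ^ ⌊log u⌋₊ := by gcongr
    _ = exp ⌊log u⌋₊ ^ 2 := by rw [← exp_nat_mul, ← exp_nat_mul]; push_cast; ring_nf
    _ ≤ exp (log u) ^ 2 := by gcongr; exact Nat.floor_le (log_nonneg hu)
    _ = u ^ 2 := by rw [exp_log (by linarith)]

lemma eventually_log_pow_le (m : ℕ) : ∀ᶠ X : ℝ in Filter.atTop, log X ^ m ≤ X := by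
  filter_upwards [(isLittleO_pow_log_id_atTop (n := m)).def one_pos,
    Filter.eventually_ge_atTop 0] with X hX hX₀
  rw [id, norm_of_nonneg hX₀, one_mul] at hX
  exact (le_norm_self _).trans hX

lemma ceil_cube_le_pow_four {u : ℝ} (hu : 2 ≤ u) : (⌈u ^ 3⌉₊ : ℝ) ≤ u ^ 4 := by
  have one_le : 1 ≤ u ^ 3 := one_le_pow₀ (by linarith)
  calc (⌈u ^ 3⌉₊ : ℝ) ≤ u ^ 3 + 1 := (Nat.ceil_lt_add_one (by positivity)).le
    _ ≤ u ^ 3 * 2 := by linarith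
    _ ≤ u ^ 3 * u := by gcongr
    _ = u ^ 4 := by ring

lemma error_terms_le {X u l b G V W z L : ℝ} (hl : 1 ≤ l) (hlu : l ^ 2 ≤ u) (hb : 0 ≤ b)
    (hX : u ^ 3 ≤ X) (hG : u ^ 3 ≤ G) (hV : u ≤ V) (hW : W ≤ u ^ 2) (hz : l ≤ z + 1)
    (hL : L ≤ 4 * b * l) :
    W * (10 * X / G + 2) + X * (2 / (z + 1)) +
      (X * (2 / (z + 1)) + 10 * X / G * (1 + u) + X / V * 2 + 10 * X / u * (1 + L)) ≤
      (48 + 40 * b) * X / l := by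
  have hl₀ : 0 < l := by linarith
  have hu : l ≤ u := (le_self_pow₀ hl two_ne_zero).trans hlu
  have hu₀ : 0 < u := hl₀.trans_le hu
  have hX₀ : 0 < X := (pow_pos hu₀ 3).trans_le hX
  have two_le : 2 ≤ 2 * X / u ^ 3 := by rw [le_div_iff₀ (by positivity)]; linarith
  have by_u : X / u ≤ X / l := by gcongr
  have small_divisors : W * (10 * X / G + 2) ≤ 12 * (X / u) :=
    calc W * (10 * X / G + 2) ≤ u ^ 2 * (10 * X / u ^ 3 + 2 * X / u ^ 3) := by
          have : 0 < G := (pow_pos hu₀ 3).trans_le hG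
          gcongr
      _ = 12 * (X / u) := by field_simp; ring
  have tail : X * (2 / (z + 1)) ≤ 2 * (X / l) :=
    calc X * (2 / (z + 1)) ≤ X * (2 / l) := by gcongr
      _ = 2 * (X / l) := by ring
  have harmonic : 10 * X / G * (1 + u) ≤ 20 * (X / u) :=
    calc 10 * X / G * (1 + u) ≤ 10 * X / u ^ 3 * (u + u) := by gcongr; linarith
      _ = 20 * (X / u ^ 2) := by field_simp; ring
      _ ≤ 20 * (X / u) := by gcongr; exact le_self_pow₀ (hl.trans hu) two_ne_zero
  have floors : X / V * 2 ≤ 2 * (X / l) :=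
    calc X / V * 2 ≤ X / l * 2 := by gcongr; exact hu.trans hV
      _ = 2 * (X / l) := mul_comm _ _
  have large_primes : 10 * X / u * (1 + L) ≤ 10 * (X / u) + 40 * b * (X / l) :=
    calc 10 * X / u * (1 + L) ≤ 10 * X / u * (1 + 4 * b * l) := by gcongr
      _ = 10 * (X / u) + 40 * b * (X * l / u) := by ring
      _ ≤ 10 * (X / u) + 40 * b * (X * l / l ^ 2) := by gcongr
      _ = 10 * (X / u) + 40 * b * (X / l) := by field_simp
  calc _ ≤ 48 * (X / l) + 40 * b * (X / l) := by linarith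
    _ = (48 + 40 * b) * X / l := by ring

end Parameters

lemma abs_S_sub_le_div_log_log {P : Polynomial ℝ} {X : ℝ} {B : ℕ} (hB : 0 < B)
    (hlog : 2 ≤ log X) (hloglog : 1 ≤ log (log X)) (hloglog_log : log (log X) ^ 2 ≤ log X)
    (hlog_X : log X ^ (8 * B) ≤ X)
    (hA : ∀ d : ℕ, 0 < d → (d : ℝ) * (⌈log X ^ 3⌉₊ : ℝ) ^ B ≤ X →
      |(#(AP P d X) : ℝ) - X / (d : ℝ) ^ 2| ≤ 10 * X / (d * ⌈log X ^ 3⌉₊) + 2) :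
    |(S P X : ℝ) - X / (π ^ 2 / 6)| ≤ (48 + 40 * B) * X / log (log X) := by
  set u := log X
  set l := log u
  set G := ⌈u ^ 3⌉₊
  have hu₀ : 0 < u := by linarith
  have hu₁ : 1 ≤ u := by linarith
  have hX₀ : 0 < X := (pow_pos hu₀ _).trans_le hlog_X
  have hX₁ : 1 < X := (log_pos_iff hX₀.le).1 hu₀
  have le_X {m : ℕ} (hm : m ≤ 8 * B) : u ^ m ≤ X := (pow_le_pow_right₀ hu₁ hm).trans hlog_X
  have cube_le_G : u ^ 3 ≤ G := Nat.le_ceil _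
  have hG : 0 < G := Nat.ceil_pos.2 (by positivity)
  have hG₁ : (1 : ℝ) ≤ G := mod_cast hG
  have pow_G_le : (G : ℝ) ^ B ≤ u ^ (4 * B) := by
    rw [pow_mul]
    exact pow_le_pow_left₀ (by positivity) (ceil_cube_le_pow_four hlog) B
  have le_pow_G : u ≤ (G : ℝ) ^ B := (le_self_pow₀ hu₁ three_ne_zero).trans <|
    cube_le_G.trans (le_self_pow₀ hG₁ hB.ne')
  have primorial_le : (primorial ⌊l⌋₊ : ℝ) ≤ u ^ 2 := primorial_floor_log_le hu₁
  have log_pow_G_le : log ((G : ℝ) ^ B) ≤ 4 * B * l :=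
    (log_le_log (by positivity) pow_G_le).trans_eq (by rw [log_pow]; push_cast; rfl)
  have := abs_S_sub_le (P := P) hX₁ (V := G ^ B) (z := ⌊l⌋₊) hG (pow_pos hG B)
    (by
      push_cast
      calc ((G : ℝ) ^ B) ^ 2 ≤ (u ^ (4 * B)) ^ 2 := by gcongr
        _ = u ^ (8 * B) := by ring
        _ ≤ X := hlog_X)
    (by
      push_cast
      calc (primorial ⌊l⌋₊ : ℝ) * (G : ℝ) ^ B ≤ u ^ 2 * u ^ (4 * B) := by gcongr
        _ = u ^ (2 + 4 * B) := (pow_add ..).symm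
        _ ≤ X := le_X (by omega))
    (mod_cast hA)
  push_cast at this
  exact this.trans (error_terms_le hloglog hloglog_log (by positivity) (le_X (by omega)) cube_le_G
    le_pow_G primorial_le (Nat.lt_floor_add_one l).le log_pow_G_le)

theorem statement0_general {α : ℝ} (hα : ¬ IsLiouvilleReal α) (k : ℕ) :
    ∃ C > (0 : ℝ), ∃ X₁ > (0 : ℝ), ∀ P : Polynomial ℝ, P.natDegree ≤ k → P.coeff 1 = α →
      ∀ X ≥ X₁, |(S P X : ℝ) - X / (π ^ 2 / 6)| ≤ C * X / log (log X) := by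
  obtain ⟨B, hB, hA⟩ := exists_abs_card_AP_sub_le hα k
  have tendsto_loglog := tendsto_log_atTop.comp tendsto_log_atTop
  have large : ∀ᶠ X in Filter.atTop, 2 ≤ log X ∧ 1 ≤ log (log X) ∧
      log (log X) ^ 2 ≤ log X ∧ log X ^ (8 * B) ≤ X := by
    filter_upwards [tendsto_log_atTop.eventually_ge_atTop 2, tendsto_loglog.eventually_ge_atTop 1,
      tendsto_log_atTop.eventually (eventually_log_pow_le 2), eventually_log_pow_le (8 * B)]
      with X h₁ h₂ h₃ h₄ using ⟨h₁, h₂, h₃, h₄⟩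
  obtain ⟨X₁, hX₁⟩ := Filter.eventually_atTop.1 large
  refine ⟨48 + 40 * B, by positivity, max X₁ 1, by positivity, fun P hP hPα X hX => ?_⟩
  obtain ⟨hlog, hloglog, hloglog_log, hlog_X⟩ := hX₁ X (le_of_max_le_left hX)
  have hG : 2 ≤ ⌈log X ^ 3⌉₊ := by
    rw [← Nat.cast_le (α := ℝ)]
    exact (hlog.trans (le_self_pow₀ (by linarith) three_ne_zero)).trans (Nat.le_ceil _)
  exact abs_S_sub_le_div_log_log hB hlog hloglog hloglog_log hlog_X
    fun d hd hdX => hA _ hG P hP hPα d hd X hdX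

lemma div_log_log_le_div_rpow {c X : ℝ} (hc : 0 ≤ c) (hX : exp (exp 1) ≤ X) :
    c / log (log X) ≤ c / log (log X) ^ ((1 : ℝ) / 3) := by
  have hlog : exp 1 ≤ log X := by simpa using log_le_log (exp_pos _) hX
  have hloglog : 1 ≤ log (log X) := by simpa using log_le_log (exp_pos _) hlog
  gcongr
  exact rpow_le_self_of_one_le hloglog (by norm_num)

/-- If the coefficient of `x` in `P` is non-Liouville, then
`|S(X) - X/ζ(2)| ≤ C·X/(log log X)^(1/3)` for all `X ≥ X₁`, where `ζ(2) = π²/6`. -/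
theorem statement0 (P : Polynomial ℝ) (hP : ¬ IsLiouvilleReal (P.coeff 1)) :
    ∃ C > (0 : ℝ), ∃ X₁ > (0 : ℝ), ∀ X : ℝ, X ≥ X₁ →
      |(S P X : ℝ) - X / (π ^ 2 / 6)| ≤ C * X / (Real.log (Real.log X)) ^ ((1 : ℝ) / 3) := by
  obtain ⟨C, hC, X₁, hX₁, h⟩ := statement0_general hP P.natDegree
  refine ⟨C, hC, max X₁ (exp (exp 1)), by positivity, fun X hX => ?_⟩
  have hX₀ : 0 < X := (lt_max_of_lt_left hX₁).trans_le hX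
  exact (h P le_rfl rfl X (le_of_max_le_left hX)).trans
    (div_log_log_le_div_rpow (by positivity) (le_of_max_le_right hX))
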